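/- arXiv:2011.12027 — 5 statements merged into one kernel-verified Lean document; each statement's English description precedes it below -/
import Mathlib

section
/- Let y : [0, τ] → [0, π] be defined by y(x) = arccos(1 − F(x)). Then y is twice differentiable on (0, τ) with y''(x) > 0 for all x ∈ (0, τ) (so y is convex there), y'(x) → +∞ as x → τ⁻, and there exists a constant C ≥ 0 such that x²/(2√3) ≤ y(x) ≤ x²/(2√3) + C·x⁴ for all x ∈ [0, τ]. -/
/-- `F t = 1 - cosh t + (t/2) * sinh t`. -/
noncomputable def F (t : ℝ) : ℝ := 1 - Real.cosh t + t / 2 * Real.sinh t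

/-- The function `y x = arccos (1 - F x)`, parametrizing the boundary curve
`{(x, y) : 1 - cos y = F x}` of the boundedness region. -/
noncomputable def yFun (x : ℝ) : ℝ := Real.arccos (1 - F x)

/-!
Convexity rests on `√F` being convex. The defect `2 F F'' - F' ^ 2` vanishes at `0` and has
derivative `2 F * (F'')'`, which is positive because `F'' = t * sinh t / 2` is increasing. Up to
a positive factor `y''` is `F'' F (2 - F) - F' ^ 2 (1 - F)`, which equals
`(2 F F'' - F' ^ 2) (2 - F) / 2 + F F' ^ 2 / 2`.
The slope `y' = F' / √(F (2 - F))` blows up at `τ` since `F τ = 2`, while `F'` stays positive.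
For the two-sided bound, compare `x ^ 4 / 24 ≤ F x ≤ x ^ 4 / 24 + O(x ^ 6)` with
`y ^ 2 / 2 - y ^ 4 / 24 ≤ 1 - cos y ≤ y ^ 2 / 2`: this yields
`x ^ 4 / 12 ≤ y ^ 2 ≤ x ^ 4 / 12 + O(x ^ 6)`.
-/

open Real Set Filter Topology

section DerivativeComparison

variable {f f' g g' : ℝ → ℝ} {a x : ℝ}

theorem le_of_hasDerivAt_le (hf : ∀ t, a ≤ t → HasDerivAt f (f' t) t)
    (hg : ∀ t, a ≤ t → HasDerivAt g (g' t) t) (ha : f a ≤ g a)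
    (hle : ∀ t, a ≤ t → f' t ≤ g' t) (hx : a ≤ x) : f x ≤ g x :=
  image_le_of_deriv_right_le_deriv_boundary
    (fun t ht ↦ (hf t ht.1).continuousAt.continuousWithinAt)
    (fun t ht ↦ (hf t ht.1).hasDerivWithinAt) ha
    (fun t ht ↦ (hg t ht.1).continuousAt.continuousWithinAt)
    (fun t ht ↦ (hg t ht.1).hasDerivWithinAt) (fun t ht ↦ hle t ht.1) (right_mem_Icc.2 hx)

theorem strictMonoOn_Ici_of_hasDerivAt_pos (hf : ∀ t, a ≤ t → HasDerivAt f (f' t) t)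
    (hpos : ∀ t, a < t → 0 < f' t) : StrictMonoOn f (Ici a) := by
  refine strictMonoOn_of_hasDerivWithinAt_pos (f' := f') (convex_Ici a)
    (fun t ht ↦ (hf t ht).continuousAt.continuousWithinAt) ?_ ?_ <;> rw [interior_Ici]
  · exact fun t ht ↦ (hf t (le_of_lt ht)).hasDerivWithinAt
  · exact hpos

theorem pos_of_hasDerivAt_pos (hf : ∀ t, a ≤ t → HasDerivAt f (f' t) t) (ha : 0 ≤ f a)
    (hpos : ∀ t, a < t → 0 < f' t) (hx : a < x) : 0 < f x :=
  ha.trans_lt (strictMonoOn_Ici_of_hasDerivAt_pos hf hpos self_mem_Ici hx.le hx)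

theorem sq_deriv_lt_two_mul_mul_deriv_deriv {f₁ f₂ f₃ : ℝ → ℝ}
    (hf : ∀ t, a ≤ t → HasDerivAt f (f₁ t) t) (hf₁ : ∀ t, a ≤ t → HasDerivAt f₁ (f₂ t) t)
    (hf₂ : ∀ t, a ≤ t → HasDerivAt f₂ (f₃ t) t) (ha : f₁ a ^ 2 ≤ 2 * f a * f₂ a)
    (hf_pos : ∀ t, a < t → 0 < f t) (hf₃_pos : ∀ t, a < t → 0 < f₃ t) (hx : a < x) :
    f₁ x ^ 2 < 2 * f x * f₂ x := by
  have hderiv (t : ℝ) (ht : a ≤ t) :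
      HasDerivAt (fun s ↦ 2 * f s * f₂ s - f₁ s ^ 2) (2 * (f t * f₃ t)) t := by
    refine ((((hf t ht).const_mul 2).mul (hf₂ t ht)).sub ((hf₁ t ht).pow 2)).congr_deriv ?_
    push_cast
    ring
  have hdefect := pos_of_hasDerivAt_pos hderiv (sub_nonneg.2 ha)
    (fun t ht ↦ mul_pos two_pos (mul_pos (hf_pos t ht) (hf₃_pos t ht))) hx
  exact sub_pos.1 hdefect

end DerivativeComparison

section ArccosOneSub

theorem hasDerivAt_arccos_one_sub {f : ℝ → ℝ} {f' x : ℝ} (hf : HasDerivAt f f' x)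
    (hx : f x ∈ Ioo 0 2) :
    HasDerivAt (fun t ↦ arccos (1 - f t)) (f' / √(f x * (2 - f x))) x := by
  refine ((hasDerivAt_arccos (by linarith [hx.2]) (by linarith [hx.1])).comp x
    (hf.const_sub 1)).congr_deriv ?_
  rw [show 1 - (1 - f x) ^ 2 = f x * (2 - f x) by ring]
  ring

theorem hasDerivAt_div_sqrt_mul_two_sub {f g : ℝ → ℝ} {g' x : ℝ} (hf : HasDerivAt f (g x) x)
    (hg : HasDerivAt g g' x) (hx : f x ∈ Ioo 0 2) :
    HasDerivAt (fun t ↦ g t / √(f t * (2 - f t)))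
      ((g' * (f x * (2 - f x)) - g x ^ 2 * (1 - f x)) / √(f x * (2 - f x)) ^ 3) x := by
  have hprod : 0 < f x * (2 - f x) := mul_pos hx.1 (sub_pos.2 hx.2)
  have hsqrt : 0 < √(f x * (2 - f x)) := sqrt_pos.2 hprod
  refine (hg.div ((hf.mul (hf.const_sub 2)).sqrt hprod.ne') hsqrt.ne').congr_deriv ?_
  have hsq := sq_sqrt hprod.le
  simp only [Pi.mul_apply]
  set s := √(f x * (2 - f x))
  rw [← hsq]
  field_simp
  ring

theorem mul_mul_two_sub_sub_sq_mul_one_sub_pos {p p₁ p₂ : ℝ} (hp : p ∈ Ioo 0 2)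
    (h : p₁ ^ 2 < 2 * p * p₂) : 0 < p₂ * (p * (2 - p)) - p₁ ^ 2 * (1 - p) := by
  have hdefect : 0 < (2 * p * p₂ - p₁ ^ 2) * (2 - p) :=
    mul_pos (sub_pos.2 h) (sub_pos.2 hp.2)
  have hsq : 0 ≤ p * p₁ ^ 2 := mul_nonneg hp.1.le (sq_nonneg p₁)
  linear_combination hdefect / 2 + hsq / 2

theorem tendsto_div_sqrt_mul_two_sub_atTop {α : Type*} {l : Filter α} {f g : α → ℝ} {c : ℝ}
    (hc : 0 < c) (hg : Tendsto g l (𝓝 c)) (hf : Tendsto f l (𝓝 2))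
    (hmem : ∀ᶠ t in l, f t ∈ Ioo 0 2) :
    Tendsto (fun t ↦ g t / √(f t * (2 - f t))) l atTop := by
  have hsqrt : Tendsto (fun t ↦ √(f t * (2 - f t))) l (𝓝 0) := by
    simpa using (hf.mul (hf.const_sub 2)).sqrt
  have hsqrt_pos : ∀ᶠ t in l, √(f t * (2 - f t)) ∈ Ioi 0 :=
    hmem.mono fun t ht ↦ sqrt_pos.2 (mul_pos ht.1 (sub_pos.2 ht.2))
  exact hg.pos_mul_atTop hc (tendsto_nhdsWithin_iff.2 ⟨hsqrt, hsqrt_pos⟩).inv_tendsto_nhdsGT_zero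

theorem cos_le_one_sub_sq_add_pow_four {x : ℝ} (hx : 0 ≤ x) :
    cos x ≤ 1 - x ^ 2 / 2 + x ^ 4 / 24 := by
  refine le_of_hasDerivAt_le (g := fun t ↦ 1 - t ^ 2 / 2 + t ^ 4 / 24)
    (g' := fun t ↦ -(t - t ^ 3 / 6)) (fun t _ ↦ hasDerivAt_cos t) (fun t _ ↦ ?_) (by simp)
    (fun t ht ↦ neg_le_neg (sin_ge_sub_cube ht)) hx
  refine ((((hasDerivAt_pow 2 t).div_const 2).const_sub 1).add
    ((hasDerivAt_pow 4 t).div_const 24)).congr_deriv ?_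
  push_cast
  ring

variable {p : ℝ}

theorem two_mul_le_sq_arccos_one_sub (hp : p ∈ Icc 0 2) : 2 * p ≤ arccos (1 - p) ^ 2 := by
  have hcos : cos (arccos (1 - p)) = 1 - p :=
    cos_arccos (by linarith [hp.2]) (by linarith [hp.1])
  linarith [one_sub_sq_div_two_le_cos (x := arccos (1 - p))]

theorem sq_arccos_one_sub_le (hp : p ∈ Icc 0 2) :
    arccos (1 - p) ^ 2 ≤ 2 * p + π ^ 4 / 48 * p ^ 2 := by
  set y := arccos (1 - p)
  have hy : 0 ≤ y := arccos_nonneg _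
  have hcos : cos y = 1 - p := cos_arccos (by linarith [hp.2]) (by linarith [hp.1])
  have hcrude : y ^ 2 ≤ π ^ 2 / 2 * p := by
    have hjordan : cos y ≤ 1 - 2 / π ^ 2 * y ^ 2 :=
      cos_le_one_sub_mul_cos_sq ((abs_of_nonneg hy).trans_le (arccos_le_pi _))
    have hle : 2 / π ^ 2 * y ^ 2 ≤ p := by linarith
    calc y ^ 2 = π ^ 2 / 2 * (2 / π ^ 2 * y ^ 2) := by field_simp
      _ ≤ π ^ 2 / 2 * p := by gcongr
  have hquartic : y ^ 4 ≤ π ^ 4 / 4 * p ^ 2 :=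
    calc y ^ 4 = (y ^ 2) ^ 2 := by ring
      _ ≤ (π ^ 2 / 2 * p) ^ 2 := by gcongr
      _ = π ^ 4 / 4 * p ^ 2 := by ring
  linarith [cos_le_one_sub_sq_add_pow_four hy]

end ArccosOneSub

/-- The derivative of `F`, in closed form. -/
noncomputable def derivF (t : ℝ) : ℝ := (t * cosh t - sinh t) / 2

/-- The second derivative of `F`, in closed form. -/
noncomputable def derivDerivF (t : ℝ) : ℝ := t * sinh t / 2

theorem hasDerivAt_F (x : ℝ) : HasDerivAt F (derivF x) x := by
  refine (((hasDerivAt_cosh x).const_sub 1).add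
    (((hasDerivAt_id x).div_const 2).mul (hasDerivAt_sinh x))).congr_deriv ?_
  simp only [derivF, id]
  ring

theorem hasDerivAt_derivF (x : ℝ) : HasDerivAt derivF (derivDerivF x) x := by
  refine ((((hasDerivAt_id x).mul (hasDerivAt_cosh x)).sub
    (hasDerivAt_sinh x)).div_const 2).congr_deriv ?_
  simp only [derivDerivF, id]
  ring

theorem hasDerivAt_derivDerivF (x : ℝ) :
    HasDerivAt derivDerivF ((sinh x + x * cosh x) / 2) x := by
  refine (((hasDerivAt_id x).mul (hasDerivAt_sinh x)).div_const 2).congr_deriv ?_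
  simp only [id]
  ring

theorem F_zero : F 0 = 0 := by simp [F]

theorem derivF_zero : derivF 0 = 0 := by simp [derivF]

section FBounds

variable {x : ℝ}

theorem derivF_pos (hx : 0 < x) : 0 < derivF x :=
  pos_of_hasDerivAt_pos (fun t _ ↦ hasDerivAt_derivF t) derivF_zero.ge
    (fun _ ht ↦ half_pos (mul_pos ht (sinh_pos_iff.2 ht))) hx

theorem strictMonoOn_F : StrictMonoOn F (Ici 0) :=
  strictMonoOn_Ici_of_hasDerivAt_pos (fun t _ ↦ hasDerivAt_F t) fun _ ↦ derivF_pos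

theorem F_pos (hx : 0 < x) : 0 < F x :=
  F_zero.symm.trans_lt (strictMonoOn_F self_mem_Ici hx.le hx)

theorem F_nonneg (hx : 0 ≤ x) : 0 ≤ F x :=
  F_zero.symm.trans_le (strictMonoOn_F.monotoneOn self_mem_Ici hx hx)

theorem sq_derivF_lt (hx : 0 < x) : derivF x ^ 2 < 2 * F x * derivDerivF x := by
  refine sq_deriv_lt_two_mul_mul_deriv_deriv (fun t _ ↦ hasDerivAt_F t)
    (fun t _ ↦ hasDerivAt_derivF t) (fun t _ ↦ hasDerivAt_derivDerivF t)
    (by simp [F_zero, derivF_zero]) (fun _ ↦ F_pos) (fun t ht ↦ ?_) hx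
  exact half_pos (add_pos (sinh_pos_iff.2 ht) (mul_pos ht (cosh_pos t)))

theorem pow_three_div_six_le_derivF (hx : 0 ≤ x) : x ^ 3 / 6 ≤ derivF x := by
  refine le_of_hasDerivAt_le (f := fun t ↦ t ^ 3 / 6) (f' := fun t ↦ t * t / 2)
    (fun t _ ↦ ?_) (fun t _ ↦ hasDerivAt_derivF t) (by simp [derivF_zero]) (fun t ht ↦ ?_) hx
  · refine ((hasDerivAt_pow 3 t).div_const 6).congr_deriv ?_
    push_cast
    ring
  · have := self_le_sinh_iff.2 ht
    unfold derivDerivF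
    gcongr

theorem pow_four_div_twenty_four_le_F (hx : 0 ≤ x) : x ^ 4 / 24 ≤ F x := by
  refine le_of_hasDerivAt_le (f := fun t ↦ t ^ 4 / 24) (f' := fun t ↦ t ^ 3 / 6)
    (fun t _ ↦ ?_) (fun t _ ↦ hasDerivAt_F t) (by simp [F_zero])
    (fun _ ↦ pow_three_div_six_le_derivF) hx
  refine ((hasDerivAt_pow 4 t).div_const 24).congr_deriv ?_
  push_cast
  ring

theorem cosh_le_one_add_sq_mul_cosh (hx : 0 ≤ x) : cosh x ≤ 1 + x ^ 2 / 2 * cosh x := by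
  have hsinh : sinh x ≤ x * cosh x := by
    have : x ^ 3 / 6 ≤ (x * cosh x - sinh x) / 2 := pow_three_div_six_le_derivF hx
    linarith [pow_nonneg hx 3]
  have hcosh : 0 ≤ 1 - cosh x + x / 2 * sinh x := F_nonneg hx
  calc cosh x ≤ 1 + x / 2 * sinh x := by linarith
    _ ≤ 1 + x / 2 * (x * cosh x) := by gcongr
    _ = 1 + x ^ 2 / 2 * cosh x := by ring

theorem sinh_le_self_add_pow_three_mul_cosh (hx : 0 ≤ x) :
    sinh x ≤ x + x ^ 3 / 6 * cosh x := by
  refine le_of_hasDerivAt_le (g := fun t ↦ t + t ^ 3 / 6 * cosh t)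
    (g' := fun t ↦ 1 + t ^ 2 / 2 * cosh t + t ^ 3 / 6 * sinh t) (fun t _ ↦ hasDerivAt_sinh t)
    (fun t _ ↦ ?_) (by simp) (fun t ht ↦ ?_) hx
  · refine ((hasDerivAt_id t).add
      (((hasDerivAt_pow 3 t).div_const 6).mul (hasDerivAt_cosh t))).congr_deriv ?_
    push_cast
    ring
  · have : 0 ≤ t ^ 3 / 6 * sinh t := mul_nonneg (by positivity) (sinh_nonneg_iff.2 ht)
    linarith [cosh_le_one_add_sq_mul_cosh ht]

theorem derivF_le (hx : 0 ≤ x) : derivF x ≤ x ^ 3 / 6 + x ^ 5 / 60 * cosh x := by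
  refine le_of_hasDerivAt_le (g := fun t ↦ t ^ 3 / 6 + t ^ 5 / 60 * cosh t)
    (g' := fun t ↦ t * (t + t ^ 3 / 6 * cosh t) / 2 + t ^ 5 / 60 * sinh t)
    (fun t _ ↦ hasDerivAt_derivF t) (fun t _ ↦ ?_) (by simp [derivF_zero]) (fun t ht ↦ ?_) hx
  · refine (((hasDerivAt_pow 3 t).div_const 6).add
      (((hasDerivAt_pow 5 t).div_const 60).mul (hasDerivAt_cosh t))).congr_deriv ?_
    push_cast
    ring
  · have hsinh := sinh_le_self_add_pow_three_mul_cosh ht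
    calc t * sinh t / 2 ≤ t * (t + t ^ 3 / 6 * cosh t) / 2 := by gcongr
      _ ≤ _ := le_add_of_nonneg_right (mul_nonneg (by positivity) (sinh_nonneg_iff.2 ht))

theorem F_le (hx : 0 ≤ x) : F x ≤ x ^ 4 / 24 + x ^ 6 / 360 * cosh x := by
  refine le_of_hasDerivAt_le (g := fun t ↦ t ^ 4 / 24 + t ^ 6 / 360 * cosh t)
    (g' := fun t ↦ t ^ 3 / 6 + t ^ 5 / 60 * cosh t + t ^ 6 / 360 * sinh t)
    (fun t _ ↦ hasDerivAt_F t) (fun t _ ↦ ?_) (by simp [F_zero]) (fun t ht ↦ ?_) hx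
  · refine (((hasDerivAt_pow 4 t).div_const 24).add
      (((hasDerivAt_pow 6 t).div_const 360).mul (hasDerivAt_cosh t))).congr_deriv ?_
    push_cast
    ring
  · exact (derivF_le ht).trans <|
      le_add_of_nonneg_right (mul_nonneg (by positivity) (sinh_nonneg_iff.2 ht))

end FBounds

section BoundaryCurve

variable {x τ : ℝ}

theorem F_eq_two_of_coth_half_eq (hτpos : 0 < τ) (hτ : cosh (τ / 2) / sinh (τ / 2) = τ / 2) :
    F τ = 2 := by
  have hsinh : 0 < sinh (τ / 2) := sinh_pos_iff.2 (half_pos hτpos)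
  have hcoth : cosh (τ / 2) = τ / 2 * sinh (τ / 2) := (div_eq_iff hsinh.ne').1 hτ
  have hF : F (2 * (τ / 2)) =
      2 - 2 * cosh (τ / 2) ^ 2 + τ * sinh (τ / 2) * cosh (τ / 2) := by
    rw [F, cosh_two_mul, sinh_two_mul]
    linear_combination cosh_sq (τ / 2)
  rw [mul_div_cancel₀ τ two_ne_zero] at hF
  linear_combination hF - 2 * cosh (τ / 2) * hcoth

theorem F_mem_Ioo (hF : F τ = 2) (hx : x ∈ Ioo 0 τ) : F x ∈ Ioo 0 2 :=
  ⟨F_pos hx.1, hF ▸ strictMonoOn_F hx.1.le (hx.1.trans hx.2).le hx.2⟩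

theorem F_le_two (hF : F τ = 2) (hx : x ∈ Icc 0 τ) : F x ≤ 2 :=
  hF ▸ strictMonoOn_F.monotoneOn hx.1 (hx.1.trans hx.2) hx.2

theorem hasDerivAt_yFun (hx : F x ∈ Ioo 0 2) :
    HasDerivAt yFun (derivF x / √(F x * (2 - F x))) x :=
  hasDerivAt_arccos_one_sub (hasDerivAt_F x) hx

theorem deriv_yFun_eventuallyEq (hx : F x ∈ Ioo 0 2) :
    deriv yFun =ᶠ[𝓝 x] fun t ↦ derivF t / √(F t * (2 - F t)) := by
  filter_upwards [(hasDerivAt_F x).continuousAt (isOpen_Ioo.mem_nhds hx)] with t ht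
  exact (hasDerivAt_yFun ht).deriv

theorem hasDerivAt_deriv_yFun (hx : F x ∈ Ioo 0 2) :
    HasDerivAt (deriv yFun)
      ((derivDerivF x * (F x * (2 - F x)) - derivF x ^ 2 * (1 - F x)) /
        √(F x * (2 - F x)) ^ 3) x :=
  (hasDerivAt_div_sqrt_mul_two_sub (hasDerivAt_F x) (hasDerivAt_derivF x) hx)
    |>.congr_of_eventuallyEq (deriv_yFun_eventuallyEq hx)

theorem deriv_deriv_yFun_pos (hx : 0 < x) (hFx : F x < 2) : 0 < deriv (deriv yFun) x := by
  have hmem : F x ∈ Ioo 0 2 := ⟨F_pos hx, hFx⟩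
  have hsqrt : 0 < √(F x * (2 - F x)) := sqrt_pos.2 (mul_pos hmem.1 (sub_pos.2 hFx))
  rw [(hasDerivAt_deriv_yFun hmem).deriv]
  exact div_pos (mul_mul_two_sub_sub_sq_mul_one_sub_pos hmem (sq_derivF_lt hx)) (pow_pos hsqrt 3)

theorem tendsto_deriv_yFun_atTop (hτpos : 0 < τ) (hF : F τ = 2) :
    Tendsto (deriv yFun) (𝓝[<] τ) atTop := by
  have hmem : ∀ᶠ x in 𝓝[<] τ, F x ∈ Ioo 0 2 := by
    filter_upwards [Ioo_mem_nhdsLT hτpos] with x hx using F_mem_Ioo hF hx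
  have hF_tendsto : Tendsto F (𝓝[<] τ) (𝓝 2) :=
    hF ▸ (hasDerivAt_F τ).continuousAt.tendsto.mono_left nhdsWithin_le_nhds
  have hderivF_tendsto : Tendsto derivF (𝓝[<] τ) (𝓝 (derivF τ)) :=
    (hasDerivAt_derivF τ).continuousAt.tendsto.mono_left nhdsWithin_le_nhds
  refine (tendsto_div_sqrt_mul_two_sub_atTop (derivF_pos hτpos) hderivF_tendsto hF_tendsto
    hmem).congr' ?_
  exact hmem.mono fun x hx ↦ (hasDerivAt_yFun hx).deriv.symm

theorem sq_sq_div_two_mul_sqrt_three (x : ℝ) : (x ^ 2 / (2 * √3)) ^ 2 = x ^ 4 / 12 := by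
  rw [div_pow, mul_pow, sq_sqrt zero_le_three]
  ring

theorem sq_div_two_mul_sqrt_three_le_yFun (hx : 0 ≤ x) (hFx : F x ≤ 2) :
    x ^ 2 / (2 * √3) ≤ yFun x := by
  refine le_of_sq_le_sq ?_ (arccos_nonneg _)
  calc (x ^ 2 / (2 * √3)) ^ 2 = 2 * (x ^ 4 / 24) := by
        rw [sq_sq_div_two_mul_sqrt_three]
        ring
    _ ≤ 2 * F x := by gcongr; exact pow_four_div_twenty_four_le_F hx
    _ ≤ yFun x ^ 2 := two_mul_le_sq_arccos_one_sub ⟨F_nonneg hx, hFx⟩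

theorem exists_sq_yFun_le (b : ℝ) :
    ∃ B, 0 ≤ B ∧ ∀ x ∈ Icc 0 b, F x ≤ 2 → yFun x ^ 2 ≤ x ^ 4 / 12 + B * x ^ 6 := by
  set A := cosh b / 360
  set M := 1 / 24 + b ^ 2 * A
  have : 0 ≤ A := by positivity
  refine ⟨2 * A + π ^ 4 / 48 * (M ^ 2 * b ^ 2), by positivity, fun x hx hFx ↦ ?_⟩
  obtain ⟨hx0, hxb⟩ := hx
  have hF0 : 0 ≤ F x := F_nonneg hx0
  have hF : F x ≤ x ^ 4 / 24 + x ^ 6 * A := by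
    have hcosh : cosh x ≤ cosh b := cosh_le_cosh.2 (abs_le_abs_of_nonneg hx0 hxb)
    calc F x ≤ x ^ 4 / 24 + x ^ 6 / 360 * cosh x := F_le hx0
      _ ≤ x ^ 4 / 24 + x ^ 6 / 360 * cosh b := by gcongr
      _ = x ^ 4 / 24 + x ^ 6 * A := by ring
  have hF_quartic : F x ≤ M * x ^ 4 :=
    calc F x ≤ x ^ 4 * (1 / 24 + x ^ 2 * A) := hF.trans_eq (by ring)
      _ ≤ x ^ 4 * (1 / 24 + b ^ 2 * A) := by gcongr
      _ = M * x ^ 4 := mul_comm _ _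
  have hF_sq : F x ^ 2 ≤ M ^ 2 * b ^ 2 * x ^ 6 :=
    calc F x ^ 2 ≤ (M * x ^ 4) ^ 2 := by gcongr
      _ = M ^ 2 * x ^ 2 * x ^ 6 := by ring
      _ ≤ M ^ 2 * b ^ 2 * x ^ 6 := by gcongr
  calc yFun x ^ 2 ≤ 2 * F x + π ^ 4 / 48 * F x ^ 2 := sq_arccos_one_sub_le ⟨hF0, hFx⟩
    _ ≤ 2 * (x ^ 4 / 24 + x ^ 6 * A) + π ^ 4 / 48 * (M ^ 2 * b ^ 2 * x ^ 6) := by gcongr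
    _ = x ^ 4 / 12 + (2 * A + π ^ 4 / 48 * (M ^ 2 * b ^ 2)) * x ^ 6 := by ring

theorem le_sq_div_add_of_sq_le {y B : ℝ} (hB : 0 ≤ B) (h : y ^ 2 ≤ x ^ 4 / 12 + B * x ^ 6) :
    y ≤ x ^ 2 / (2 * √3) + √3 * B * x ^ 4 := by
  refine le_of_sq_le_sq ?_ (by positivity)
  have hcross : 2 * (x ^ 2 / (2 * √3)) * (√3 * B * x ^ 4) = B * x ^ 6 := by
    field_simp
  calc y ^ 2 ≤ x ^ 4 / 12 + B * x ^ 6 + (√3 * B * x ^ 4) ^ 2 :=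
        le_add_of_le_of_nonneg h (sq_nonneg _)
    _ = (x ^ 2 / (2 * √3) + √3 * B * x ^ 4) ^ 2 := by
        rw [add_sq, sq_sq_div_two_mul_sqrt_three, hcross]

theorem exists_yFun_le (b : ℝ) :
    ∃ C, 0 ≤ C ∧ ∀ x ∈ Icc 0 b, F x ≤ 2 → yFun x ≤ x ^ 2 / (2 * √3) + C * x ^ 4 := by
  obtain ⟨B, hB, hsq⟩ := exists_sq_yFun_le b
  exact ⟨√3 * B, by positivity, fun x hx hFx ↦ le_sq_div_add_of_sq_le hB (hsq x hx hFx)⟩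

end BoundaryCurve

/-- On `(0, τ)` the boundary curve `y x = arccos (1 - F x)` is twice differentiable with
positive second derivative (hence convex); its slope tends to `+∞` as `x → τ⁻`; and
`x²/(2√3) ≤ y x ≤ x²/(2√3) + C x⁴` on `[0, τ]` for some constant `C ≥ 0`. -/
theorem boundary_curve_shape (τ : ℝ) (hτpos : 0 < τ)
    (hτ : Real.cosh (τ / 2) / Real.sinh (τ / 2) = τ / 2) :
    (∀ x ∈ Set.Ioo (0 : ℝ) τ,
      DifferentiableAt ℝ yFun x ∧ DifferentiableAt ℝ (deriv yFun) x ∧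
        0 < deriv (deriv yFun) x) ∧
    Filter.Tendsto (deriv yFun) (nhdsWithin τ (Set.Iio τ)) Filter.atTop ∧
    ∃ C : ℝ, 0 ≤ C ∧ ∀ x ∈ Set.Icc (0 : ℝ) τ,
      x ^ 2 / (2 * Real.sqrt 3) ≤ yFun x ∧
        yFun x ≤ x ^ 2 / (2 * Real.sqrt 3) + C * x ^ 4 := by
  have hF : F τ = 2 := F_eq_two_of_coth_half_eq hτpos hτ
  refine ⟨fun x hx ↦ ?_, tendsto_deriv_yFun_atTop hτpos hF, ?_⟩
  · have hmem := F_mem_Ioo hF hx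
    exact ⟨(hasDerivAt_yFun hmem).differentiableAt,
      (hasDerivAt_deriv_yFun hmem).differentiableAt, deriv_deriv_yFun_pos hx.1 hmem.2⟩
  · obtain ⟨C, hC, hupper⟩ := exists_yFun_le τ
    refine ⟨C, hC, fun x hx ↦ ?_⟩
    have hFx : F x ≤ 2 := F_le_two hF hx
    exact ⟨sq_div_two_mul_sqrt_three_le_yFun hx.1 hFx, hupper x hx hFx⟩
end

section
/- For every a ∈ ℝ and every k ∈ ℕ, ∫_ℝ |h_k(y − i·a)|² dy = (e^{a²}/(π·k!)) · ∬_{ℝ²} ((x₁ + a√2)² + x₂²)^k · e^{−x₁² − x₂²} dx₁ dx₂. -/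
open MeasureTheory

/-- The creation (raising) operator `f ↦ z f - f'` on functions of a complex variable. -/
noncomputable def raiseOp (f : ℂ → ℂ) : ℂ → ℂ := fun z => z * f z - deriv f z

/-- The Hermite function `h_k(z) = (2^k k! √π)^{-1/2} (z - d/dz)^k e^{-z²/2}`,
as an entire function of a complex variable. -/
noncomputable def hermiteFun (k : ℕ) (z : ℂ) : ℂ :=
  ((Real.sqrt ((2 : ℝ) ^ k * (k.factorial : ℝ) * Real.sqrt Real.pi) : ℝ) : ℂ)⁻¹ *
    (raiseOp^[k] fun w => Complex.exp (-(w ^ 2) / 2)) z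

/-!
Up to the factor `e^{a²} / k!`, the left-hand side is the expectation of `|He_k(ξ - i b)|²` for a
real standard Gaussian `ξ`, where `b = a√2` and `He_k` is the probabilists' Hermite polynomial, and
the right-hand side is that of `|(ζ + b)^k|²` for a standard complex Gaussian `ζ`. Both `He_j` and
`ζ^j` satisfy the binomial identity for translations (Appell sequences), and both are orthogonal
with squared norms `j!`, so by Pythagoras both expectations equal
`∑ j, (k.choose j * |b|^(k-j))² * j!`.
-/

section HermitePolynomials

open Polynomial

theorem derivative_hermite_succ (n : ℕ) :
    derivative (hermite (n + 1)) = (n + 1) * hermite n := by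
  induction n with
  | zero => simp
  | succ n ih =>
    rw [hermite_succ (n + 1), derivative_sub, derivative_mul, ih, derivative_mul, derivative_X,
      derivative_add, derivative_natCast, derivative_one]
    push_cast
    linear_combination -(n + 1 : ℤ[X]) * hermite_succ n

theorem iterate_derivative_hermite (n k : ℕ) :
    derivative^[k] (hermite n) = n.descFactorial k • hermite (n - k) := by
  induction k with
  | zero => simp
  | succ k ih =>
    rw [Function.iterate_succ_apply', ih, derivative_smul, Nat.descFactorial_succ, mul_comm,
      mul_smul, ← Nat.sub_sub]
    congr 1
    cases n - k with
    | zero => simp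
    | succ m => simp only [derivative_hermite_succ, Nat.add_sub_cancel, nsmul_eq_mul, Nat.cast_succ]

theorem hasseDeriv_hermite (n k : ℕ) :
    hasseDeriv k (hermite n) = n.choose k • hermite (n - k) := by
  have h : k.factorial • hasseDeriv k (hermite n) = derivative^[k] (hermite n) :=
    congrFun (factorial_smul_hasseDeriv k) (hermite n)
  rw [iterate_derivative_hermite, Nat.descFactorial_eq_factorial_mul_choose, mul_smul] at h
  exact smul_right_injective _ k.factorial_ne_zero h

theorem hasseDeriv_map {R S : Type*} [Semiring R] [Semiring S] (p : R[X]) (f : R →+* S) (k : ℕ) :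
    hasseDeriv k (p.map f) = (hasseDeriv k p).map f := by
  ext n
  simp only [hasseDeriv_coeff, coeff_map, map_mul, map_natCast]

theorem aeval_add_eq_sum_hasseDeriv {R A : Type*} [CommSemiring R] [CommSemiring A] [Algebra R A]
    (p : R[X]) (x y : A) :
    aeval (x + y) p = ∑ k ∈ Finset.range (p.natDegree + 1), aeval x (hasseDeriv k p) * y ^ k := by
  have natDegree_lt : (taylor x (p.map (algebraMap R A))).natDegree < p.natDegree + 1 := by
    rw [natDegree_taylor, Nat.lt_succ_iff]
    exact natDegree_map_le
  rw [← eval_map_algebraMap, add_comm, ← taylor_eval, eval_eq_sum_range' natDegree_lt]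
  simp only [taylor_coeff, hasseDeriv_map, eval_map_algebraMap]

theorem aeval_add_hermite {R : Type*} [CommRing R] (x c : R) (n : ℕ) :
    aeval (x + c) (hermite n) =
      ∑ j ∈ Finset.range (n + 1), n.choose j * c ^ (n - j) * aeval x (hermite j) := by
  rw [aeval_add_eq_sum_hasseDeriv, natDegree_hermite, ← Finset.sum_flip]
  refine Finset.sum_congr rfl fun j hj => ?_
  have hjn : j ≤ n := Nat.lt_succ_iff.mp (Finset.mem_range.mp hj)
  rw [hasseDeriv_hermite, Nat.choose_symm hjn, Nat.sub_sub_self hjn, map_nsmul, nsmul_eq_mul]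
  ring

end HermitePolynomials

theorem integral_norm_sq_sum_of_orthogonal {α ι 𝕜 : Type*} [RCLike 𝕜] {_ : MeasurableSpace α}
    {μ : Measure α} (s : Finset ι) {f : ι → α → 𝕜} (hf : ∀ i ∈ s, MemLp (f i) 2 μ)
    (orthogonal : ∀ i ∈ s, ∀ j ∈ s, i ≠ j → ∫ x, f i x * star (f j x) ∂μ = 0) (c : ι → 𝕜) :
    ∫ x, ‖∑ i ∈ s, c i * f i x‖ ^ 2 ∂μ = ∑ i ∈ s, ‖c i‖ ^ 2 * ∫ x, ‖f i x‖ ^ 2 ∂μ := by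
  have integrable_mul_star (i) (hi : i ∈ s) (j) (hj : j ∈ s) :
      Integrable (fun x => c i * star (c j) * (f i x * star (f j x))) μ :=
    ((hf i hi).integrable_mul (hf j hj).star).const_mul _
  have mul_star_eq (z : 𝕜) : z * star z = ((‖z‖ ^ 2 : ℝ) : 𝕜) := by
    rw [← starRingEnd_apply, RCLike.mul_conj, RCLike.ofReal_pow]
  apply RCLike.ofReal_injective (K := 𝕜)
  calc ((∫ x, ‖∑ i ∈ s, c i * f i x‖ ^ 2 ∂μ : ℝ) : 𝕜)
      = ∫ x, ∑ i ∈ s, ∑ j ∈ s, c i * star (c j) * (f i x * star (f j x)) ∂μ := by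
        rw [← integral_ofReal]
        congr with x
        rw [← mul_star_eq, star_sum, Finset.sum_mul_sum]
        simp only [star_mul', mul_mul_mul_comm]
    _ = ∑ i ∈ s, ∑ j ∈ s, c i * star (c j) * ∫ x, f i x * star (f j x) ∂μ := by
        rw [integral_finsetSum _ fun i hi => integrable_finsetSum _ (integrable_mul_star i hi)]
        refine Finset.sum_congr rfl fun i hi => ?_
        rw [integral_finsetSum _ (integrable_mul_star i hi)]
        simp only [integral_const_mul]
    _ = ∑ i ∈ s, c i * star (c i) * ∫ x, f i x * star (f i x) ∂μ := by
        refine Finset.sum_congr rfl fun i hi => Finset.sum_eq_single_of_mem i hi fun j hj hji => ?_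
        rw [orthogonal i hi j hj hji.symm, mul_zero]
    _ = ((∑ i ∈ s, ‖c i‖ ^ 2 * ∫ x, ‖f i x‖ ^ 2 ∂μ : ℝ) : 𝕜) := by
        simp only [mul_star_eq, integral_ofReal, RCLike.ofReal_sum, RCLike.ofReal_mul]

section Gaussian

open ProbabilityTheory Polynomial
open scoped NNReal

theorem hasDerivAt_gaussianPDFReal (μ : ℝ) (v : ℝ≥0) (x : ℝ) :
    HasDerivAt (gaussianPDFReal μ v) (-((x - μ) / v) * gaussianPDFReal μ v x) x := by
  have h : HasDerivAt (fun x : ℝ => -(x - μ) ^ 2 / (2 * v)) (-((x - μ) / v)) x := by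
    refine (((hasDerivAt_id' x).sub_const μ).pow 2).neg.div_const (2 * v : ℝ) |>.congr_deriv ?_
    norm_num
    field_simp
  exact (h.exp.const_mul (√(2 * Real.pi * v))⁻¹).congr_deriv (by rw [gaussianPDFReal]; ring)

theorem integrable_eval_gaussianReal (p : ℝ[X]) (μ : ℝ) (v : ℝ≥0) :
    Integrable (fun x => p.eval x) (gaussianReal μ v) := by
  induction p using Polynomial.induction_on' with
  | add p q hp hq => simpa only [eval_add] using! hp.add hq
  | monomial n a =>
    simp only [eval_monomial]
    exact (integrable_pow_of_mem_interior_integrableExpSet (by simp) n).const_mul a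

theorem integrable_gaussianReal_iff {E : Type*} [NormedAddCommGroup E] [NormedSpace ℝ E] {μ : ℝ}
    {v : ℝ≥0} (hv : v ≠ 0) {f : ℝ → E} :
    Integrable f (gaussianReal μ v) ↔ Integrable fun x => gaussianPDFReal μ v x • f x := by
  rw [gaussianReal_of_var_ne_zero μ hv, integrable_withDensity_iff_integrable_smul'
    (measurable_gaussianPDF μ v) (ae_of_all _ fun _ => gaussianPDF_lt_top)]
  simp only [toReal_gaussianPDF]

theorem integral_sub_mul_gaussianReal {f f' : ℝ → ℝ} {μ : ℝ} {v : ℝ≥0}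
    (hderiv : ∀ x, HasDerivAt f (f' x) x) (hf : Integrable f (gaussianReal μ v))
    (hf' : Integrable f' (gaussianReal μ v))
    (hsub : Integrable (fun x => (x - μ) * f x) (gaussianReal μ v)) :
    ∫ x, (x - μ) * f x ∂gaussianReal μ v = v * ∫ x, f' x ∂gaussianReal μ v := by
  obtain rfl | hv := eq_or_ne v 0
  · simp
  have hv' : (v : ℝ) ≠ 0 := NNReal.coe_ne_zero.mpr hv
  have hdiff := (hf'.const_mul (v : ℝ)).sub hsub
  have hderiv_mul (x : ℝ) : HasDerivAt (fun x => gaussianPDFReal μ v x • (v * f x))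
      (gaussianPDFReal μ v x • (v * f' x - (x - μ) * f x)) x := by
    refine ((hasDerivAt_gaussianPDFReal μ v x).mul ((hderiv x).const_mul _)).congr_deriv ?_
    rw [smul_eq_mul]
    field_simp
    ring
  have hzero : ∫ x, (v * f' x - (x - μ) * f x) ∂gaussianReal μ v = 0 := by
    rw [integral_gaussianReal_eq_integral_smul hv]
    exact integral_eq_zero_of_hasDerivAt_of_integrable hderiv_mul
      ((integrable_gaussianReal_iff hv).mp hdiff)
      ((integrable_gaussianReal_iff hv).mp (hf.const_mul _))
  rw [integral_sub (hf'.const_mul _) hsub, integral_const_mul] at hzero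
  exact (sub_eq_zero.mp hzero).symm

theorem integral_eval_X_sub_C_mul_gaussianReal (p : ℝ[X]) (μ : ℝ) (v : ℝ≥0) :
    ∫ x, ((X - C μ) * p).eval x ∂gaussianReal μ v =
      v * ∫ x, (derivative p).eval x ∂gaussianReal μ v := by
  have integrable_sub_mul := integrable_eval_gaussianReal ((X - C μ) * p) μ v
  simp only [eval_mul, eval_sub, eval_X, eval_C] at integrable_sub_mul ⊢
  exact integral_sub_mul_gaussianReal p.hasDerivAt (integrable_eval_gaussianReal p μ v)
    (integrable_eval_gaussianReal (derivative p) μ v) integrable_sub_mul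

theorem integral_eval_hermite_mul_gaussianReal (n : ℕ) (p : ℝ[X]) :
    ∫ x, ((hermite n).map (algebraMap ℤ ℝ) * p).eval x ∂gaussianReal 0 1 =
      ∫ x, (derivative^[n] p).eval x ∂gaussianReal 0 1 := by
  induction n generalizing p with
  | zero => simp
  | succ n ih =>
    set H : ℝ[X] := (hermite n).map (algebraMap ℤ ℝ) with hH
    have hint (q : ℝ[X]) := integrable_eval_gaussianReal q 0 1
    have stein (q : ℝ[X]) : ∫ x, (X * q).eval x ∂gaussianReal 0 1 =
        ∫ x, (derivative q).eval x ∂gaussianReal 0 1 := by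
      simpa only [C_0, sub_zero, NNReal.coe_one, one_mul] using
        integral_eval_X_sub_C_mul_gaussianReal q 0 1
    have map_hermite_succ_mul : (hermite (n + 1)).map (algebraMap ℤ ℝ) * p =
        X * (H * p) - derivative H * p := by
      rw [hermite_succ, Polynomial.map_sub, Polynomial.map_mul, map_X, hH, derivative_map]
      ring
    calc ∫ x, ((hermite (n + 1)).map (algebraMap ℤ ℝ) * p).eval x ∂gaussianReal 0 1
        = ∫ x, (X * (H * p)).eval x ∂gaussianReal 0 1 -
            ∫ x, (derivative H * p).eval x ∂gaussianReal 0 1 := by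
          simp only [map_hermite_succ_mul, eval_sub]
          exact integral_sub (hint _) (hint _)
      _ = ∫ x, (H * derivative p).eval x ∂gaussianReal 0 1 := by
          rw [stein, ← integral_sub (hint _) (hint _)]
          simp only [derivative_mul, eval_add, add_sub_cancel_left]
      _ = ∫ x, (derivative^[n + 1] p).eval x ∂gaussianReal 0 1 := ih _

theorem integral_aeval_hermite_mul_aeval_hermite (m n : ℕ) :
    ∫ x : ℝ, aeval x (hermite m) * aeval x (hermite n) ∂gaussianReal 0 1 =
      n.descFactorial m * ∫ x : ℝ, aeval x (hermite (n - m)) ∂gaussianReal 0 1 := by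
  have h := integral_eval_hermite_mul_gaussianReal m ((hermite n).map (algebraMap ℤ ℝ))
  rw [iterate_derivative_map, iterate_derivative_hermite] at h
  simpa only [eval_mul, eval_map_algebraMap, map_nsmul, nsmul_eq_mul, map_mul, map_natCast,
    integral_const_mul] using h

theorem integral_aeval_hermite_mul_aeval_hermite_of_ne {m n : ℕ} (h : m ≠ n) :
    ∫ x : ℝ, aeval x (hermite m) * aeval x (hermite n) ∂gaussianReal 0 1 = 0 := by
  wlog hnm : n < m generalizing m n
  · simpa only [mul_comm] using this h.symm (h.lt_of_le (not_lt.mp hnm))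
  rw [integral_aeval_hermite_mul_aeval_hermite, Nat.descFactorial_of_lt hnm, Nat.cast_zero,
    zero_mul]

theorem integral_aeval_hermite_sq (n : ℕ) :
    ∫ x : ℝ, aeval x (hermite n) ^ 2 ∂gaussianReal 0 1 = n.factorial := by
  simp only [pow_two, integral_aeval_hermite_mul_aeval_hermite, Nat.descFactorial_self,
    Nat.sub_self, hermite_zero, map_one, integral_const, probReal_univ, one_smul, mul_one]

theorem integral_gaussianReal_zero_one {E : Type*} [NormedAddCommGroup E] [NormedSpace ℝ E]
    (f : ℝ → E) :
    ∫ x, f x ∂gaussianReal 0 1 =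
      (√Real.pi)⁻¹ • ∫ y, Real.exp (-y ^ 2) • f (√2 * y) := by
  have density (y : ℝ) :
      √2 * gaussianPDFReal 0 1 (√2 * y) = (√Real.pi)⁻¹ * Real.exp (-y ^ 2) := by
    rw [gaussianPDFReal, NNReal.coe_one, mul_one, mul_one, sub_zero, mul_pow,
      Real.sq_sqrt zero_le_two, Real.sqrt_mul zero_le_two]
    field_simp
  calc ∫ x, f x ∂gaussianReal 0 1
      = √2 • ∫ y, gaussianPDFReal 0 1 (√2 * y) • f (√2 * y) := by
        rw [integral_gaussianReal_eq_integral_smul one_ne_zero,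
          Measure.integral_comp_mul_left fun x => gaussianPDFReal 0 1 x • f x,
          abs_of_nonneg (by positivity), smul_inv_smul₀ (by positivity)]
    _ = (√Real.pi)⁻¹ • ∫ y, Real.exp (-y ^ 2) • f (√2 * y) := by
        rw [← integral_smul, ← integral_smul]
        simp only [smul_smul, density]

theorem memLp_two_eval_gaussianReal (p : ℝ[X]) (μ : ℝ) (v : ℝ≥0) :
    MemLp (fun x => p.eval x) 2 (gaussianReal μ v) := by
  rw [memLp_two_iff_integrable_sq p.continuous.aestronglyMeasurable]
  have h := integrable_eval_gaussianReal (p ^ 2) μ v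
  simpa only [eval_pow] using h

theorem aeval_complex_ofReal (p : ℤ[X]) (x : ℝ) : aeval (x : ℂ) p = (aeval x p : ℝ) :=
  aeval_algebraMap_apply ℂ x p

theorem integral_norm_sq_aeval_hermite_add (c : ℂ) (n : ℕ) :
    ∫ x : ℝ, ‖aeval ((x : ℂ) + c) (hermite n)‖ ^ 2 ∂gaussianReal 0 1 =
      ∑ j ∈ Finset.range (n + 1), (n.choose j * ‖c‖ ^ (n - j)) ^ 2 * j.factorial := by
  have memLp (j : ℕ) : MemLp (fun x : ℝ => aeval (x : ℂ) (hermite j)) 2 (gaussianReal 0 1) := by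
    simpa only [aeval_complex_ofReal, eval_map_algebraMap] using!
      (memLp_two_eval_gaussianReal ((hermite j).map (algebraMap ℤ ℝ)) 0 1).ofReal (K := ℂ)
  simp only [aeval_add_hermite]
  rw [integral_norm_sq_sum_of_orthogonal _ fun j _ => memLp j]
  · simp only [aeval_complex_ofReal, Complex.norm_real, Real.norm_eq_abs, sq_abs,
      integral_aeval_hermite_sq, norm_mul, norm_pow, Complex.norm_natCast]
  · intro i _ j _ hij
    simp only [aeval_complex_ofReal, ← starRingEnd_apply, Complex.conj_ofReal, ← Complex.ofReal_mul]
    rw [integral_complex_ofReal, integral_aeval_hermite_mul_aeval_hermite_of_ne hij,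
      Complex.ofReal_zero]

end Gaussian

section Complex

open Complex ComplexConjugate

theorem integral_pow_mul_conj_pow_mul_radial_eq_zero {i j : ℕ} (hij : i ≠ j) (g : ℝ → ℂ) :
    ∫ w : ℂ, w ^ i * conj w ^ j * g ‖w‖ = 0 := by
  -- Rotating by `u` multiplies the integrand by `u ^ (i - j) = -1`.
  set u : Circle := Circle.exp (Real.pi / (i - j)) with u_def
  have index_sub_ne_zero : (i - j : ℂ) ≠ 0 := sub_ne_zero.mpr (Nat.cast_injective.ne hij)
  have rotation_factor : (u : ℂ) ^ i * conj (u : ℂ) ^ j = -1 := by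
    rw [u_def, Circle.coe_exp, ← Complex.exp_conj, ← Complex.exp_nat_mul, ← Complex.exp_nat_mul,
      ← Complex.exp_add, ← Complex.exp_pi_mul_I]
    congr 1
    simp only [ofReal_div, ofReal_sub, ofReal_natCast, map_mul, map_div₀, conj_ofReal, map_sub,
      map_natCast, conj_I, mul_neg]
    field_simp
    ring
  rw [← self_eq_neg]
  calc ∫ w : ℂ, w ^ i * conj w ^ j * g ‖w‖
      = ∫ w : ℂ, (u * w) ^ i * conj (u * w) ^ j * g ‖u * w‖ :=
        ((rotation u).measurePreserving.integral_comp
          (rotation u).toHomeomorph.measurableEmbedding fun w => w ^ i * conj w ^ j * g ‖w‖).symm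
    _ = ∫ w : ℂ, -(w ^ i * conj w ^ j * g ‖w‖) := by
        congr with w
        rw [norm_mul, Circle.norm_coe, one_mul, map_mul, mul_pow, mul_pow]
        linear_combination (w ^ i * conj w ^ j * g ‖w‖) * rotation_factor
    _ = -∫ w : ℂ, w ^ i * conj w ^ j * g ‖w‖ := integral_neg _

theorem integral_norm_pow_mul_exp_neg_norm_sq (n : ℕ) :
    ∫ w : ℂ, ‖w‖ ^ (2 * n) * Real.exp (-‖w‖ ^ 2) = Real.pi * n.factorial := by
  have h := Complex.integral_rpow_mul_exp_neg_rpow (p := 2) (q := (2 * n : ℕ)) one_le_two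
    ((neg_neg_of_pos two_pos).trans_le (Nat.cast_nonneg _))
  have hn : ((2 * n : ℕ) + 2 : ℝ) / 2 = n + 1 := by push_cast; ring
  rw [hn, Real.Gamma_nat_eq_factorial, mul_div_cancel_left₀ _ two_ne_zero] at h
  simpa only [Real.rpow_natCast, Real.rpow_two] using h

theorem norm_mul_exp_neg_norm_sq_div_two_sq (z w : ℂ) :
    ‖z * Real.exp (-‖w‖ ^ 2 / 2)‖ ^ 2 = ‖z‖ ^ 2 * Real.exp (-‖w‖ ^ 2) := by
  rw [norm_mul, mul_pow, norm_real, Real.norm_eq_abs, sq_abs, ← Real.exp_nat_mul, Nat.cast_two,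
    mul_div_cancel₀ _ two_ne_zero]

/-- The monomial `w ^ n` of the Bargmann–Fock space. The square root of the Gaussian weight
`exp (-‖w‖ ^ 2)` is absorbed into the function, so that the Fock inner product becomes that of
`L²(ℂ)` with Lebesgue measure. -/
noncomputable def fockMonomial (n : ℕ) (w : ℂ) : ℂ := w ^ n * Real.exp (-‖w‖ ^ 2 / 2)

theorem integral_norm_sq_fockMonomial (n : ℕ) :
    ∫ w, ‖fockMonomial n w‖ ^ 2 = Real.pi * n.factorial := by
  simp only [fockMonomial, norm_mul_exp_neg_norm_sq_div_two_sq, norm_pow, ← pow_mul, mul_comm n,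
    integral_norm_pow_mul_exp_neg_norm_sq]

theorem memLp_two_fockMonomial (n : ℕ) : MemLp (fockMonomial n) 2 := by
  have aestronglyMeasurable : AEStronglyMeasurable (fockMonomial n) := by
    unfold fockMonomial
    fun_prop
  rw [memLp_two_iff_integrable_sq_norm aestronglyMeasurable]
  refine .of_integral_ne_zero ?_
  rw [integral_norm_sq_fockMonomial]
  positivity

theorem integral_fockMonomial_mul_star_of_ne {m n : ℕ} (h : m ≠ n) :
    ∫ w, fockMonomial m w * star (fockMonomial n w) = 0 := by
  rw [← integral_pow_mul_conj_pow_mul_radial_eq_zero h fun t => (Real.exp (-t ^ 2 / 2) : ℂ) ^ 2]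
  congr with w
  simp only [fockMonomial, ← starRingEnd_apply, map_mul, map_pow, conj_ofReal]
  ring

theorem integral_norm_add_pow_mul_exp_neg_norm_sq (c : ℂ) (n : ℕ) :
    ∫ w : ℂ, ‖w + c‖ ^ (2 * n) * Real.exp (-‖w‖ ^ 2) =
      Real.pi * ∑ j ∈ Finset.range (n + 1), (n.choose j * ‖c‖ ^ (n - j)) ^ 2 * j.factorial := by
  have expand (w : ℂ) : ‖w + c‖ ^ (2 * n) * Real.exp (-‖w‖ ^ 2) =
      ‖∑ j ∈ Finset.range (n + 1), n.choose j * c ^ (n - j) * fockMonomial j w‖ ^ 2 := by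
    have sum_eq : ∑ j ∈ Finset.range (n + 1), n.choose j * c ^ (n - j) * fockMonomial j w =
        (w + c) ^ n * Real.exp (-‖w‖ ^ 2 / 2) := by
      rw [add_pow, Finset.sum_mul]
      exact Finset.sum_congr rfl fun j _ => by rw [fockMonomial]; ring
    rw [sum_eq, norm_mul_exp_neg_norm_sq_div_two_sq, norm_pow, ← pow_mul, mul_comm n]
  simp only [expand]
  rw [integral_norm_sq_sum_of_orthogonal _ (fun j _ => memLp_two_fockMonomial j)
    (fun _ _ _ _ => integral_fockMonomial_mul_star_of_ne), Finset.mul_sum]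
  simp only [integral_norm_sq_fockMonomial, norm_mul, norm_pow, norm_natCast, mul_left_comm]

theorem integral_real_prod_eq_integral_complex {E : Type*} [NormedAddCommGroup E] [NormedSpace ℝ E]
    (f : ℂ → E) : ∫ p : ℝ × ℝ, f (p.1 + p.2 * I) = ∫ w, f w := by
  rw [← volume_preserving_equiv_real_prod.symm.integral_comp']
  simp only [measurableEquivRealProd_symm_apply, mk_eq_add_mul_I]

end Complex

section HermiteFunctions

open Polynomial ProbabilityTheory

theorem raiseOp_aeval_mul_gaussian (c : ℂ) (p : ℤ[X]) :
    raiseOp (fun z : ℂ => c * aeval (√2 * z) p * Complex.exp (-(z ^ 2) / 2)) = fun z : ℂ =>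
      c * √2 * aeval (√2 * z) (X * p - derivative p) * Complex.exp (-(z ^ 2) / 2) := by
  have sqrt_two_sq : (√2 : ℂ) ^ 2 = 2 := by
    rw [← Complex.ofReal_pow, Real.sq_sqrt zero_le_two, Complex.ofReal_ofNat]
  funext z
  have hasDerivAt_scale : HasDerivAt (fun z : ℂ => √2 * z) √2 z := by
    simpa only [mul_one] using (hasDerivAt_id' z).const_mul (√2 : ℂ)
  have hasDerivAt_aeval : HasDerivAt (fun z : ℂ => aeval (√2 * z) p)
      (aeval (√2 * z) (derivative p) * √2) z :=
    (p.hasDerivAt_aeval _).comp z hasDerivAt_scale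
  have hasDerivAt_exponent : HasDerivAt (fun z : ℂ => -(z ^ 2) / 2) (-z) z :=
    ((hasDerivAt_pow 2 z).fun_neg.div_const 2).congr_deriv (by norm_num; ring)
  have deriv_eq := ((hasDerivAt_aeval.const_mul c).fun_mul hasDerivAt_exponent.cexp).deriv
  simp only [raiseOp, deriv_eq, map_sub, map_mul, aeval_X]
  linear_combination
    (-c * aeval (√2 * z) p * Complex.exp (-(z ^ 2) / 2) * z) * sqrt_two_sq

theorem raiseOp_iterate_gaussian (k : ℕ) :
    (raiseOp^[k] fun w => Complex.exp (-(w ^ 2) / 2)) = fun z : ℂ =>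
      (√2 : ℂ) ^ k * aeval (√2 * z) (hermite k) * Complex.exp (-(z ^ 2) / 2) := by
  induction k with
  | zero => simp
  | succ k ih =>
    rw [Function.iterate_succ_apply', ih, raiseOp_aeval_mul_gaussian, hermite_succ, pow_succ]

theorem hermiteFun_eq_aeval_hermite (k : ℕ) (z : ℂ) :
    hermiteFun k z = (√(k.factorial * √Real.pi) : ℂ)⁻¹ * aeval (√2 * z) (hermite k) *
      Complex.exp (-(z ^ 2) / 2) := by
  have sqrt_two_pow : √((2 : ℝ) ^ k) = √2 ^ k := by
    rw [Real.sqrt_eq_iff_mul_self_eq_of_pos (by positivity), ← mul_pow,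
      Real.mul_self_sqrt zero_le_two]
  have sqrt_eq : √((2 : ℝ) ^ k * k.factorial * √Real.pi) = √2 ^ k * √(k.factorial * √Real.pi) := by
    rw [mul_assoc, Real.sqrt_mul (by positivity), sqrt_two_pow]
  have sqrt_two_pow_ne_zero : (√2 : ℂ) ^ k ≠ 0 := by norm_num
  rw [hermiteFun, raiseOp_iterate_gaussian, sqrt_eq]
  push_cast
  rw [mul_inv]
  field_simp

theorem norm_sq_hermiteFun_sub_mul_I (a y : ℝ) (k : ℕ) :
    ‖hermiteFun k (y - a * Complex.I)‖ ^ 2 =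
      Real.exp (a ^ 2) / k.factorial * ((√Real.pi)⁻¹ * (Real.exp (-y ^ 2) *
        ‖aeval (((√2 * y : ℝ) : ℂ) + -(a * √2) * Complex.I) (hermite k)‖ ^ 2)) := by
  have norm_exp_sq : ‖Complex.exp (-((y - a * Complex.I) ^ 2) / 2)‖ ^ 2 =
      Real.exp (a ^ 2) * Real.exp (-y ^ 2) := by
    rw [Complex.norm_exp, ← Real.exp_nat_mul, ← Real.exp_add]
    congr 1
    simp only [Nat.cast_ofNat, pow_two, Complex.div_ofNat_re, Complex.neg_re, Complex.mul_re,
      Complex.sub_re, Complex.sub_im, Complex.mul_im, Complex.ofReal_re, Complex.ofReal_im,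
      Complex.I_re, Complex.I_im]
    ring
  have sqrt_two_mul : (√2 : ℂ) * (y - a * Complex.I) =
      ((√2 * y : ℝ) : ℂ) + -(a * √2) * Complex.I := by
    push_cast
    ring
  rw [hermiteFun_eq_aeval_hermite, sqrt_two_mul, norm_mul, norm_mul, mul_pow, mul_pow, norm_exp_sq,
    norm_inv, Complex.norm_real, Real.norm_eq_abs, inv_pow, sq_abs, Real.sq_sqrt (by positivity),
    mul_inv]
  ring

theorem integral_norm_sq_hermiteFun_sub_mul_I (a : ℝ) (k : ℕ) :
    ∫ y : ℝ, ‖hermiteFun k (y - a * Complex.I)‖ ^ 2 =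
      Real.exp (a ^ 2) / k.factorial *
        ∫ x : ℝ, ‖aeval ((x : ℂ) + -(a * √2) * Complex.I) (hermite k)‖ ^ 2 ∂gaussianReal 0 1 := by
  simp only [norm_sq_hermiteFun_sub_mul_I]
  rw [integral_const_mul, integral_const_mul, integral_gaussianReal_zero_one]
  simp only [smul_eq_mul]

end HermiteFunctions

/-- The squared `L²` norm of `h_k(y - i a)` equals
`(e^{a²}/(π k!)) ∬ ((x₁ + a√2)² + x₂²)^k e^{-x₁²-x₂²} dx₁ dx₂`. -/
theorem hermite_shift_norm_integral (a : ℝ) (k : ℕ) :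
    (∫ y : ℝ, ‖hermiteFun k ((y : ℂ) - (a : ℂ) * Complex.I)‖ ^ 2) =
      Real.exp (a ^ 2) / (Real.pi * (k.factorial : ℝ)) *
        ∫ p : ℝ × ℝ, ((p.1 + a * Real.sqrt 2) ^ 2 + p.2 ^ 2) ^ k *
          Real.exp (-p.1 ^ 2 - p.2 ^ 2) := by
  have integrand_eq (p : ℝ × ℝ) :
      ((p.1 + a * √2) ^ 2 + p.2 ^ 2) ^ k * Real.exp (-p.1 ^ 2 - p.2 ^ 2) =
        ‖(p.1 + p.2 * Complex.I) + (a * √2 : ℝ)‖ ^ (2 * k) *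
          Real.exp (-‖(p.1 + p.2 * Complex.I : ℂ)‖ ^ 2) := by
    rw [pow_mul, add_right_comm, ← Complex.ofReal_add, Complex.sq_norm, Complex.sq_norm,
      Complex.normSq_add_mul_I, Complex.normSq_add_mul_I, neg_add']
  have norm_shift_eq : ‖(-(a * √2) * Complex.I : ℂ)‖ = ‖((a * √2 : ℝ) : ℂ)‖ := by
    simp
  simp only [integrand_eq]
  rw [integral_norm_sq_hermiteFun_sub_mul_I, integral_norm_sq_aeval_hermite_add, norm_shift_eq,
    integral_real_prod_eq_integral_complex fun w : ℂ =>
      ‖w + (a * √2 : ℝ)‖ ^ (2 * k) * Real.exp (-‖w‖ ^ 2),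
    integral_norm_add_pow_mul_exp_neg_norm_sq]
  field_simp
end

section
/- Let k ∈ ℕ, write k₁ = k + 1/2, and let u ≥ 0. Then, with C₀ = √π·erf(π/2), (C₀/(e·√(8π·k₁)))·e^{−2u} ≤ e^{−k₁·(2u + sinh 2u)} · e^{2k₁·sinh²u} · L_k(−4k₁·sinh²u) ≤ √(27/e). -/
/-- The Laguerre polynomial `L_k(x) = ∑_{m=0}^k (1/m!) C(k,m) (-x)^m`. -/
noncomputable def Lag (k : ℕ) (x : ℝ) : ℝ :=
  ∑ m ∈ Finset.range (k + 1), (1 / (m.factorial : ℝ)) * (k.choose m : ℝ) * (-x) ^ m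

/-- The error function `erf z = (2/√π) ∫₀^z e^{-t²} dt`. -/
noncomputable def erf (z : ℝ) : ℝ :=
  2 / Real.sqrt Real.pi * ∫ t in (0 : ℝ)..z, Real.exp (-t ^ 2)


/-!
Put `p = 1 - e^{-2u}` and `r = (k + 1/2) p`. The normalized projection norm is `e^{-u}` times the
probability that independent binomial `(k, p)` and Poisson `(r)` variables coincide, because
`C(k, m) p^m (1 - p)^(k - m) * e^{-r} r^m / m!` sums to a multiple of `L_k(-r p / (1 - p))`.
A probability is at most `1`, which gives the upper bound. For the lower bound, Stirling's
formula bounds the Poisson weight at `m` below by a multiple of `e^{-(m - r)^2 / r} / √(k + 1/2)`,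
and Jensen's inequality moves the binomial expectation into the exponent, where the second moment
about `r` is at most `r`.
-/

open Finset Real
open scoped Nat

lemma eval_bernsteinPolynomial_nonneg (k m : ℕ) {p : ℝ} (hp₀ : 0 ≤ p) (hp₁ : p ≤ 1) :
    0 ≤ (bernsteinPolynomial ℝ k m).eval p := by
  simp only [bernsteinPolynomial, Polynomial.eval_mul, Polynomial.eval_pow, Polynomial.eval_sub,
    Polynomial.eval_one, Polynomial.eval_X, Polynomial.eval_natCast]
  exact mul_nonneg (mul_nonneg (Nat.cast_nonneg _) (pow_nonneg hp₀ m))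
    (pow_nonneg (sub_nonneg.2 hp₁) _)

lemma sum_eval_bernsteinPolynomial {R : Type*} [CommRing R] (k : ℕ) (p : R) :
    ∑ m ∈ range (k + 1), (bernsteinPolynomial R k m).eval p = 1 := by
  simpa [Polynomial.eval_finsetSum] using
    congrArg (Polynomial.eval p) (bernsteinPolynomial.sum R k)

lemma sum_mul_eval_bernsteinPolynomial {R : Type*} [CommRing R] (k : ℕ) (p : R) :
    ∑ m ∈ range (k + 1), m * (bernsteinPolynomial R k m).eval p = k * p := by
  simpa [Polynomial.eval_finsetSum] using
    congrArg (Polynomial.eval p) (bernsteinPolynomial.sum_smul R k)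

lemma sum_sq_sub_mul_eval_bernsteinPolynomial {R : Type*} [CommRing R] (k : ℕ) (p a : R) :
    ∑ m ∈ range (k + 1), (m - a) ^ 2 * (bernsteinPolynomial R k m).eval p =
      k * p * (1 - p) + (k * p - a) ^ 2 := by
  have variance :
      ∑ m ∈ range (k + 1), (k * p - m) ^ 2 * (bernsteinPolynomial R k m).eval p =
        k * p * (1 - p) := by
    simpa [Polynomial.eval_finsetSum] using
      congrArg (Polynomial.eval p) (bernsteinPolynomial.variance R k)
  calc ∑ m ∈ range (k + 1), (m - a) ^ 2 * (bernsteinPolynomial R k m).eval p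
      = ∑ m ∈ range (k + 1), ((k * p - m) ^ 2 * (bernsteinPolynomial R k m).eval p
          + 2 * (k * p - a) * (m * (bernsteinPolynomial R k m).eval p)
          + (a ^ 2 - (k * p) ^ 2) * (bernsteinPolynomial R k m).eval p) :=
        sum_congr rfl fun m _ ↦ by ring
    _ = k * p * (1 - p) + (k * p - a) ^ 2 := by
        rw [sum_add_distrib, sum_add_distrib, ← mul_sum, ← mul_sum, variance,
          sum_mul_eval_bernsteinPolynomial, sum_eval_bernsteinPolynomial]
        ring

-- The shift by `1 / 2` makes the bound hold at `n = 0` as well.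
lemma factorial_le_exp_one_mul_sqrt_mul_pow (n : ℕ) :
    (n ! : ℝ) ≤ exp 1 * √(n + 1 / 2) * (n / exp 1) ^ n := by
  cases n with
  | zero =>
    have h_sqrt : (1 / 2 : ℝ) ≤ √(1 / 2) := le_sqrt_of_sq_le (by norm_num)
    simp only [Nat.factorial_zero, Nat.cast_one, Nat.cast_zero, zero_add, pow_zero, mul_one]
    calc (1 : ℝ) = 2 * (1 / 2) := by norm_num
      _ ≤ exp 1 * √(1 / 2) := by
        gcongr
        exact exp_one_gt_two.le
  | succ n =>
    have h := Stirling.stirlingSeq'_antitone (Nat.zero_le n)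
    simp only [Function.comp_apply, Nat.succ_eq_add_one, zero_add, Stirling.stirlingSeq_one] at h
    rw [Stirling.stirlingSeq, div_le_iff₀ (by positivity), sqrt_mul (by norm_num)] at h
    calc ((n + 1)! : ℝ)
        ≤ exp 1 / √2 * (√2 * √(n + 1 : ℕ) * ((n + 1 : ℕ) / exp 1) ^ (n + 1)) := h
      _ = exp 1 * √(n + 1 : ℕ) * ((n + 1 : ℕ) / exp 1) ^ (n + 1) := by field_simp
      _ ≤ exp 1 * √((n + 1 : ℕ) + 1 / 2) * ((n + 1 : ℕ) / exp 1) ^ (n + 1) := by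
        gcongr
        linarith

-- `x ≤ e^(x - 1)` at `x = n / r` replaces the relative entropy in the exponent by a quadratic.
lemma exp_neg_sq_div_mul_pow_le (n : ℕ) {r : ℝ} (hr : 0 < r) :
    exp (-((n - r) ^ 2 / r)) * (n / exp 1) ^ n ≤ exp (-r) * r ^ n := by
  have h_ratio : (n / r) ^ n ≤ exp (n * (n / r - 1)) := by
    rw [exp_nat_mul]
    exact pow_le_pow_left₀ (by positivity) (by linarith [add_one_le_exp ((n : ℝ) / r - 1)]) n
  have h_exponent : -((n - r) ^ 2 / r) + -n + n * (n / r - 1) = -r := by field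
  have h_exp : (exp 1)⁻¹ ^ n = exp (-n) := by rw [← exp_neg, ← exp_nat_mul, mul_neg_one]
  calc exp (-((n - r) ^ 2 / r)) * (n / exp 1) ^ n
      = exp (-((n - r) ^ 2 / r)) * exp (-n) * (n / r) ^ n * r ^ n := by
        rw [div_eq_mul_inv (n : ℝ) (exp 1), mul_pow, h_exp, div_pow]
        field_simp
    _ ≤ exp (-((n - r) ^ 2 / r)) * exp (-n) * exp (n * (n / r - 1)) * r ^ n := by gcongr
    _ = exp (-r) * r ^ n := by rw [← exp_add, ← exp_add, h_exponent]

lemma exp_neg_sq_div_div_sqrt_le_poisson_weight (n : ℕ) {r : ℝ} (hr : 0 < r) :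
    exp (-((n - r) ^ 2 / r)) / (exp 1 * √(n + 1 / 2)) ≤ exp (-r) * r ^ n / n ! := by
  rw [div_le_div_iff₀ (by positivity) (by positivity)]
  calc exp (-((n - r) ^ 2 / r)) * n !
      ≤ exp (-((n - r) ^ 2 / r)) * (exp 1 * √(n + 1 / 2) * (n / exp 1) ^ n) := by
        gcongr
        exact factorial_le_exp_one_mul_sqrt_mul_pow n
    _ = exp (-((n - r) ^ 2 / r)) * (n / exp 1) ^ n * (exp 1 * √(n + 1 / 2)) := by ring
    _ ≤ exp (-r) * r ^ n * (exp 1 * √(n + 1 / 2)) :=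
        mul_le_mul_of_nonneg_right (exp_neg_sq_div_mul_pow_le n hr) (by positivity)

/-- The probability that independent binomial `(k, p)` and Poisson `(r)` variables take the same
value. The binomial weights are written as Bernstein polynomials, so that `p` and `r` may be
arbitrary real numbers. -/
noncomputable def binomialPoissonCoincidence (k : ℕ) (p r : ℝ) : ℝ :=
  ∑ m ∈ range (k + 1), (bernsteinPolynomial ℝ k m).eval p * (exp (-r) * r ^ m / m !)

lemma binomialPoissonCoincidence_zero (k : ℕ) : binomialPoissonCoincidence k 0 0 = 1 := by
  simp [binomialPoissonCoincidence, bernsteinPolynomial.eval_at_0]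

lemma binomialPoissonCoincidence_nonneg (k : ℕ) {p r : ℝ} (hp₀ : 0 ≤ p) (hp₁ : p ≤ 1)
    (hr : 0 ≤ r) : 0 ≤ binomialPoissonCoincidence k p r :=
  sum_nonneg fun m _ ↦ mul_nonneg (eval_bernsteinPolynomial_nonneg k m hp₀ hp₁) (by positivity)

lemma binomialPoissonCoincidence_le_one (k : ℕ) {p r : ℝ} (hp₀ : 0 ≤ p) (hp₁ : p ≤ 1)
    (hr : 0 ≤ r) : binomialPoissonCoincidence k p r ≤ 1 := by
  have poisson_le_one (m : ℕ) : exp (-r) * r ^ m / m ! ≤ 1 := by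
    rw [mul_div_assoc, exp_neg, inv_mul_le_one₀ (exp_pos r)]
    exact pow_div_factorial_le_exp r hr m
  calc binomialPoissonCoincidence k p r
      ≤ ∑ m ∈ range (k + 1), (bernsteinPolynomial ℝ k m).eval p :=
        sum_le_sum fun m _ ↦ mul_le_of_le_one_right
          (eval_bernsteinPolynomial_nonneg k m hp₀ hp₁) (poisson_le_one m)
    _ = 1 := sum_eval_bernsteinPolynomial k p

lemma exp_neg_div_sqrt_le_binomialPoissonCoincidence (k : ℕ) {p r : ℝ} (hp₀ : 0 ≤ p)
    (hp₁ : p ≤ 1) (hr : 0 < r) :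
    exp (-((k * p * (1 - p) + (k * p - r) ^ 2) / r)) / (exp 1 * √(k + 1 / 2)) ≤
      binomialPoissonCoincidence k p r := by
  have jensen := convexOn_exp.map_sum_le (t := range (k + 1))
    (w := fun m ↦ (bernsteinPolynomial ℝ k m).eval p) (p := fun m ↦ -((m - r) ^ 2 / r))
    (fun m _ ↦ eval_bernsteinPolynomial_nonneg k m hp₀ hp₁) (sum_eval_bernsteinPolynomial k p)
    (fun m _ ↦ Set.mem_univ _)
  have mean_exponent :
      ∑ m ∈ range (k + 1), (bernsteinPolynomial ℝ k m).eval p • (-((m - r) ^ 2 / r)) =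
        -((k * p * (1 - p) + (k * p - r) ^ 2) / r) := by
    rw [← sum_sq_sub_mul_eval_bernsteinPolynomial, sum_div, ← sum_neg_distrib]
    exact sum_congr rfl fun m _ ↦ by rw [smul_eq_mul]; ring
  rw [mean_exponent] at jensen
  calc exp (-((k * p * (1 - p) + (k * p - r) ^ 2) / r)) / (exp 1 * √(k + 1 / 2))
      ≤ (∑ m ∈ range (k + 1), (bernsteinPolynomial ℝ k m).eval p • exp (-((m - r) ^ 2 / r))) /
          (exp 1 * √(k + 1 / 2)) := by gcongr
    _ = ∑ m ∈ range (k + 1), (bernsteinPolynomial ℝ k m).eval p *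
          (exp (-((m - r) ^ 2 / r)) / (exp 1 * √(k + 1 / 2))) := by
        simp only [sum_div, smul_eq_mul, mul_div_assoc]
    _ ≤ binomialPoissonCoincidence k p r := by
        refine sum_le_sum fun m hm ↦ mul_le_mul_of_nonneg_left ?_
          (eval_bernsteinPolynomial_nonneg k m hp₀ hp₁)
        have hmk : m ≤ k := mem_range_succ_iff.1 hm
        refine le_trans ?_ (exp_neg_sq_div_div_sqrt_le_poisson_weight m hr)
        gcongr

lemma exp_neg_two_div_sqrt_le_binomialPoissonCoincidence (k : ℕ) {p : ℝ} (hp₀ : 0 ≤ p)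
    (hp₁ : p ≤ 1) :
    exp (-2) / √(k + 1 / 2) ≤ binomialPoissonCoincidence k p ((k + 1 / 2) * p) := by
  rcases hp₀.eq_or_lt with rfl | hp
  · rw [mul_zero, binomialPoissonCoincidence_zero, div_le_one (by positivity)]
    have h_exp : exp (-2) ≤ 1 / 2 := by
      rw [exp_neg, one_div]
      exact inv_anti₀ two_pos (by linarith [add_one_le_exp (2 : ℝ)])
    exact le_sqrt_of_sq_le (by nlinarith [exp_pos (-2), (k.cast_nonneg : (0 : ℝ) ≤ k)])
  · have hr : 0 < ((k : ℝ) + 1 / 2) * p := by positivity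
    have h_exponent :
        (k * p * (1 - p) + (k * p - (k + 1 / 2) * p) ^ 2) / ((k + 1 / 2) * p) ≤ 1 := by
      rw [div_le_one hr]
      nlinarith [mul_nonneg (k.cast_nonneg : (0 : ℝ) ≤ k) (sq_nonneg p)]
    calc exp (-2) / √(k + 1 / 2) = exp (-1) / (exp 1 * √(k + 1 / 2)) := by
          rw [div_eq_div_iff (by positivity) (by positivity), ← mul_assoc, ← exp_add]
          norm_num
      _ ≤ exp (-((k * p * (1 - p) + (k * p - (k + 1 / 2) * p) ^ 2) / ((k + 1 / 2) * p))) /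
            (exp 1 * √(k + 1 / 2)) := by gcongr
      _ ≤ binomialPoissonCoincidence k p ((k + 1 / 2) * p) :=
          exp_neg_div_sqrt_le_binomialPoissonCoincidence k hp₀ hp₁ hr

lemma binomialPoissonCoincidence_eq_Lag (k : ℕ) {p : ℝ} (hp : p ≠ 1) (r : ℝ) :
    binomialPoissonCoincidence k p r = exp (-r) * (1 - p) ^ k * Lag k (-(r * p / (1 - p))) := by
  have hq : 1 - p ≠ 0 := sub_ne_zero.2 hp.symm
  rw [binomialPoissonCoincidence, Lag, mul_sum]
  refine sum_congr rfl fun m hm ↦ ?_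
  obtain ⟨j, rfl⟩ := Nat.exists_eq_add_of_le (mem_range_succ_iff.1 hm)
  simp only [bernsteinPolynomial, Polynomial.eval_mul, Polynomial.eval_pow, Polynomial.eval_sub,
    Polynomial.eval_one, Polynomial.eval_X, Polynomial.eval_natCast, Nat.add_sub_cancel_left,
    neg_neg, div_pow, mul_pow, pow_add]
  field_simp [hq]

lemma four_mul_sinh_sq (u : ℝ) :
    4 * sinh u ^ 2 = (1 - exp (-2 * u)) ^ 2 / exp (-2 * u) := by
  have h_exp : exp (-2 * u) = (exp u ^ 2)⁻¹ := by
    rw [neg_mul, exp_neg, ← Nat.cast_two, exp_nat_mul]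
  rw [h_exp, sinh_eq, exp_neg]
  field

lemma neg_mul_add_sinh_two_mul (K u : ℝ) :
    -K * (2 * u + sinh (2 * u)) + 2 * K * sinh u ^ 2 =
      -2 * K * u - K * (1 - exp (-2 * u)) := by
  have h_sub : cosh (2 * u) - sinh (2 * u) = exp (-2 * u) := by rw [cosh_sub_sinh, neg_mul]
  rw [cosh_two_mul] at h_sub
  linear_combination K * h_sub - K * cosh_sq u

lemma exp_mul_Lag_eq_exp_neg_mul_binomialPoissonCoincidence (k : ℕ) (u : ℝ) :
    exp (-((k : ℝ) + 1 / 2) * (2 * u + sinh (2 * u))) *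
        (exp (2 * ((k : ℝ) + 1 / 2) * sinh u ^ 2) *
          Lag k (-4 * ((k : ℝ) + 1 / 2) * sinh u ^ 2)) =
      exp (-u) * binomialPoissonCoincidence k (1 - exp (-2 * u))
        ((k + 1 / 2) * (1 - exp (-2 * u))) := by
  have h_arg : -4 * ((k : ℝ) + 1 / 2) * sinh u ^ 2 =
      -((k + 1 / 2) * (1 - exp (-2 * u)) * (1 - exp (-2 * u)) / exp (-2 * u)) := by
    linear_combination -((k : ℝ) + 1 / 2) * four_mul_sinh_sq u
  rw [binomialPoissonCoincidence_eq_Lag k (by simp [exp_ne_zero]), sub_sub_cancel, h_arg,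
    ← mul_assoc, ← exp_add, neg_mul_add_sinh_two_mul, ← exp_nat_mul, ← mul_assoc, ← exp_add,
    ← exp_add]
  congr 2
  ring

lemma erf_le_one (z : ℝ) : erf z ≤ 1 := by
  have h_int : MeasureTheory.Integrable fun t : ℝ ↦ exp (-t ^ 2) := by
    simpa using integrable_exp_neg_mul_sq one_pos
  have h_total : ∫ t in Set.Ioi (0 : ℝ), exp (-t ^ 2) = √π / 2 := by
    simpa using integral_gaussian_Ioi 1
  have h_split := intervalIntegral.integral_interval_add_Ioi (b := z)
    (h_int.integrableOn (s := Set.Ioi (0 : ℝ))) h_int.integrableOn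
  have h_tail : 0 ≤ ∫ t in Set.Ioi z, exp (-t ^ 2) :=
    MeasureTheory.integral_nonneg fun t ↦ (exp_pos _).le
  have h_pi : 0 < √π := by positivity
  rw [erf, div_mul_eq_mul_div, div_le_one h_pi]
  linarith

lemma sqrt_pi_mul_erf_div_le {x : ℝ} (hx : 0 < x) (z : ℝ) :
    √π * erf z / (exp 1 * √(8 * π * x)) ≤ exp (-2) / √x := by
  have h_exp_one : exp 1 ≤ √8 :=
    le_sqrt_of_sq_le (by nlinarith [exp_pos 1, exp_one_lt_d9])
  calc √π * erf z / (exp 1 * √(8 * π * x))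
      ≤ √π * 1 / (exp 1 * √(8 * π * x)) := by
        gcongr
        exact erf_le_one z
    _ = 1 / (exp 1 * √8) / √x := by
        rw [sqrt_mul (by positivity), sqrt_mul (by positivity)]
        field_simp
    _ ≤ 1 / (exp 1 * exp 1) / √x := by gcongr
    _ = exp (-2) / √x := by
        rw [← exp_add, one_div, ← exp_neg]
        norm_num

/-- Two-sided bound on `e^{-k₁(2u + sinh 2u)} ‖Π_{√(2k₁) sinh u, k}‖`, where
`‖Π_{√(2k₁) sinh u, k}‖ = e^{2k₁ sinh²u} L_k(-4 k₁ sinh²u)` and `k₁ = k + 1/2`. -/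
theorem projection_norm_weak_asymptotics (k : ℕ) (u : ℝ) (hu : 0 ≤ u) :
    Real.sqrt Real.pi * erf (Real.pi / 2) /
        (Real.exp 1 * Real.sqrt (8 * Real.pi * ((k : ℝ) + 1 / 2))) * Real.exp (-2 * u) ≤
      Real.exp (-((k : ℝ) + 1 / 2) * (2 * u + Real.sinh (2 * u))) *
        (Real.exp (2 * ((k : ℝ) + 1 / 2) * Real.sinh u ^ 2) *
          Lag k (-4 * ((k : ℝ) + 1 / 2) * Real.sinh u ^ 2)) ∧
    Real.exp (-((k : ℝ) + 1 / 2) * (2 * u + Real.sinh (2 * u))) *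
        (Real.exp (2 * ((k : ℝ) + 1 / 2) * Real.sinh u ^ 2) *
          Lag k (-4 * ((k : ℝ) + 1 / 2) * Real.sinh u ^ 2)) ≤
      Real.sqrt (27 / Real.exp 1) := by
  rw [exp_mul_Lag_eq_exp_neg_mul_binomialPoissonCoincidence]
  have hk : (0 : ℝ) < k + 1 / 2 := by positivity
  have hp₀ : 0 ≤ 1 - exp (-2 * u) := sub_nonneg.2 (exp_le_one_iff.2 (by linarith))
  have hp₁ : 1 - exp (-2 * u) ≤ 1 := sub_le_self 1 (exp_pos _).le
  have hr : 0 ≤ (k + 1 / 2) * (1 - exp (-2 * u)) := mul_nonneg hk.le hp₀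
  have h_nonneg := binomialPoissonCoincidence_nonneg k hp₀ hp₁ hr
  constructor
  · rw [mul_comm (exp (-u))]
    exact mul_le_mul
      ((sqrt_pi_mul_erf_div_le hk _).trans
        (exp_neg_two_div_sqrt_le_binomialPoissonCoincidence k hp₀ hp₁))
      (exp_le_exp.2 (by linarith)) (exp_pos _).le h_nonneg
  · calc exp (-u) * binomialPoissonCoincidence k (1 - exp (-2 * u))
          ((k + 1 / 2) * (1 - exp (-2 * u)))
        ≤ 1 := mul_le_one₀ (exp_le_one_iff.2 (neg_nonpos.2 hu))
          h_nonneg (binomialPoissonCoincidence_le_one k hp₀ hp₁ hr)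
      _ ≤ √(27 / exp 1) := by
        rw [one_le_sqrt, one_le_div (exp_pos 1)]
        linarith [exp_one_lt_three]
end

section
/- Let p₁, p₂ > 0 satisfy p₁ + p₂ < 1/2. Then there exist K > 0 and C > 0 such that for every k ∈ ℕ with k ≥ K and every real u satisfying (3/8)·k₁^{−2p₂} ≤ u ≤ p₂·log k₁ (where k₁ = k + 1/2), one has | e^{2k₁·sinh²u} · L_k(−4k₁·sinh²u) · (4π·k₁·sinh 2u)^{1/2} · e^{−k₁·(2u + sinh 2u)} − 1 | ≤ C·k₁^{−p₁}. -/
/-!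
Write `κ = k + 1/2`. The Laguerre equation says that the Euler logarithmic derivative `q` of
`e^{x/2} L_k(-x)` solves the Riccati equation `x q' = κ x + x²/4 - q²`. Along `x = 4κ sinh² u` the
square root of `κ x + x²/4` is `κ sinh 2u`, and the second-order WKB approximation of `q` is
`κ sinh 2u - g(u)` with `g = (1 + tanh² u)/4`. Its error, multiplied by `κ sinh 2u`, starts at `0`
for `u = 0` and solves an equation whose drift points inwards at the levels `-9` and `1`, so it
stays between them for every `u > 0`, uniformly in `k`. Hence the logarithm of the ratio between
`e^{x/2} L_k(-x)` and its claimed asymptotics has derivative `O(1/(κ sinh² u))`. As `u → ∞` only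
the leading coefficient `1/k!` matters and this logarithm tends to the error of Stirling's
formula, which is `O(1/k)`; integrating back from `∞` bounds it by `O(1/(κ u) + 1/k)`.
-/

open Filter Topology Polynomial Real Set

/-- The reflected Laguerre polynomial `L_k(-X)`, whose coefficients are nonnegative. -/
noncomputable def negLaguerre (k : ℕ) : ℝ[X] :=
  ∑ m ∈ Finset.range (k + 1), monomial m ((k.choose m : ℝ) / m.factorial)

lemma coeff_negLaguerre (k m : ℕ) : (negLaguerre k).coeff m = (k.choose m : ℝ) / m.factorial := by
  rcases le_or_gt m k with hm | hm
  · simp [negLaguerre, coeff_monomial, Nat.lt_succ_of_le hm]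
  · simp [negLaguerre, coeff_monomial, Nat.choose_eq_zero_of_lt hm, hm.not_ge]

lemma eval_negLaguerre (k : ℕ) (x : ℝ) : (negLaguerre k).eval x = Lag k (-x) := by
  simp only [negLaguerre, Lag, eval_finsetSum, eval_monomial, neg_neg]
  exact Finset.sum_congr rfl fun m _ => by ring

lemma coeff_succ_negLaguerre (k m : ℕ) :
    ((m : ℝ) + 1) ^ 2 * (negLaguerre k).coeff (m + 1) = (k - m) * (negLaguerre k).coeff m := by
  have choose_succ : (k.choose (m + 1) : ℝ) * (m + 1) = k.choose m * (k - m) := by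
    rcases le_or_gt m k with hm | hm
    · rw [← Nat.cast_sub hm]
      exact_mod_cast Nat.choose_succ_right_eq k m
    · simp [Nat.choose_eq_zero_of_lt hm, Nat.choose_eq_zero_of_lt (hm.trans m.lt_succ_self)]
  rw [coeff_negLaguerre, coeff_negLaguerre, Nat.factorial_succ]
  push_cast
  field_simp
  linear_combination choose_succ

lemma negLaguerre_ode (k : ℕ) :
    X * derivative (derivative (negLaguerre k)) + (1 + X) * derivative (negLaguerre k) =
      C (k : ℝ) * negLaguerre k := by
  ext m
  have hrec := coeff_succ_negLaguerre k m
  cases m <;>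
    simp only [add_mul, one_mul, coeff_add, coeff_X_mul, coeff_X_mul_zero, coeff_derivative,
      coeff_C_mul] <;>
    push_cast at hrec ⊢ <;> linear_combination hrec

lemma natDegree_negLaguerre (k : ℕ) : (negLaguerre k).natDegree = k := by
  refine natDegree_eq_of_le_of_coeff_ne_zero (natDegree_le_iff_coeff_eq_zero.mpr fun m hm => ?_) ?_
  · simp [coeff_negLaguerre, Nat.choose_eq_zero_of_lt hm]
  · simp [coeff_negLaguerre, Nat.factorial_ne_zero]

lemma leadingCoeff_negLaguerre (k : ℕ) : (negLaguerre k).leadingCoeff = 1 / k.factorial := by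
  simp [leadingCoeff, natDegree_negLaguerre, coeff_negLaguerre]

lemma tendsto_eval_negLaguerre_div_pow (k : ℕ) :
    Tendsto (fun x : ℝ => (negLaguerre k).eval x / x ^ k) atTop (𝓝 (1 / k.factorial)) := by
  have hdeg : (negLaguerre k).degree = (X ^ k : ℝ[X]).degree := by
    rw [degree_X_pow, degree_eq_natDegree, natDegree_negLaguerre]
    exact leadingCoeff_ne_zero.mp (by simp [leadingCoeff_negLaguerre, Nat.factorial_ne_zero])
  simpa [leadingCoeff_negLaguerre] using
    div_tendsto_atTop_leadingCoeff_div_of_degree_eq (negLaguerre k) (X ^ k) hdeg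

lemma one_le_eval_negLaguerre (k : ℕ) {x : ℝ} (hx : 0 ≤ x) : 1 ≤ (negLaguerre k).eval x := by
  rw [negLaguerre, eval_finsetSum]
  simpa using Finset.single_le_sum (s := Finset.range (k + 1))
    (f := fun m => (monomial m ((k.choose m : ℝ) / m.factorial)).eval x)
    (fun m _ => by rw [eval_monomial]; positivity) (Finset.mem_range.mpr k.succ_pos)

lemma eval_derivative_negLaguerre_nonneg (k : ℕ) {x : ℝ} (hx : 0 ≤ x) :
    0 ≤ (derivative (negLaguerre k)).eval x := by
  simp only [negLaguerre, derivative_sum, derivative_monomial, eval_finsetSum, eval_monomial]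
  positivity

/-- The Euler logarithmic derivative `x d/dx log (e^{x/2} L_k(-x))`. -/
noncomputable def laguerreEulerDeriv (k : ℕ) (x : ℝ) : ℝ :=
  x / 2 + x * (derivative (negLaguerre k)).eval x / (negLaguerre k).eval x

lemma laguerreEulerDeriv_nonneg (k : ℕ) {x : ℝ} (hx : 0 ≤ x) : 0 ≤ laguerreEulerDeriv k x := by
  have := one_le_eval_negLaguerre k hx
  have := eval_derivative_negLaguerre_nonneg k hx
  unfold laguerreEulerDeriv
  positivity

lemma continuousAt_laguerreEulerDeriv (k : ℕ) {x : ℝ} (hx : 0 ≤ x) :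
    ContinuousAt (laguerreEulerDeriv k) x := by
  have := one_le_eval_negLaguerre k hx
  unfold laguerreEulerDeriv
  fun_prop (disch := positivity)

lemma hasDerivAt_laguerreEulerDeriv (k : ℕ) {x : ℝ} (hx : 0 < x) :
    HasDerivAt (laguerreEulerDeriv k)
      (((k + 1 / 2) * x + x ^ 2 / 4 - laguerreEulerDeriv k x ^ 2) / x) x := by
  have hP : (0 : ℝ) < (negLaguerre k).eval x := one_pos.trans_le (one_le_eval_negLaguerre k hx.le)
  have ode := congrArg (eval x) (negLaguerre_ode k)
  simp only [eval_add, eval_mul, eval_X, eval_one, eval_C] at ode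
  have h := ((hasDerivAt_id x).div_const 2).add
    (((hasDerivAt_id x).mul ((derivative (negLaguerre k)).hasDerivAt x)).div
      ((negLaguerre k).hasDerivAt x) hP.ne')
  refine h.congr_deriv ?_
  simp only [laguerreEulerDeriv, Pi.mul_apply, id_eq]
  field_simp
  linear_combination (16 * eval x (negLaguerre k)) * ode

section Calculus

lemma le_of_hasDerivAt_of_deriv_neg_of_eq {f f' : ℝ → ℝ} {a M : ℝ}
    (hf : ∀ x, a < x → HasDerivAt f (f' x) x) (h_start : ∀ᶠ x in 𝓝[>] a, f x ≤ M)
    (h_barrier : ∀ x, a < x → f x = M → f' x < 0) {x : ℝ} (hx : a < x) : f x ≤ M := by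
  obtain ⟨b, hb, hab, hbx⟩ := (h_start.and (Ioo_mem_nhdsGT hx)).exists
  have hf' : ∀ y, b ≤ y → HasDerivAt f (f' y) y := fun y hy => hf y (hab.trans_le hy)
  exact image_le_of_deriv_right_lt_deriv_boundary
    (fun y hy => (hf' y hy.1).continuousAt.continuousWithinAt)
    (fun y hy => (hf' y hy.1).hasDerivWithinAt) hb (fun y => hasDerivAt_const y M)
    (fun y hy => h_barrier y (hab.trans_le hy.1)) (right_mem_Icc.mpr hbx.le)

lemma norm_sub_le_of_norm_deriv_le_of_tendsto {E : Type*} [NormedAddCommGroup E] [NormedSpace ℝ E]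
    {f f' : ℝ → E} {B B' : ℝ → ℝ} {a M : ℝ} {L : E}
    (hf : ∀ x, a ≤ x → HasDerivAt f (f' x) x) (hB : ∀ x, a ≤ x → HasDerivAt B (B' x) x)
    (bound : ∀ x, a ≤ x → ‖f' x‖ ≤ B' x) (hfL : Tendsto f atTop (𝓝 L))
    (hBM : Tendsto B atTop (𝓝 M)) : ‖L - f a‖ ≤ M - B a := by
  refine le_of_tendsto_of_tendsto (hfL.sub_const (f a)).norm (hBM.sub_const (B a)) ?_
  filter_upwards [eventually_ge_atTop a] with b hab
  exact image_norm_le_of_norm_deriv_right_le_deriv_boundary'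
    (fun x hx => ((hf x hx.1).sub_const _).continuousAt.continuousWithinAt)
    (fun x hx => ((hf x hx.1).sub_const _).hasDerivWithinAt) (by simp)
    (fun x hx => ((hB x hx.1).sub_const _).continuousAt.continuousWithinAt)
    (fun x hx => ((hB x hx.1).sub_const _).hasDerivWithinAt)
    (fun x hx => bound x hx.1) (right_mem_Icc.mpr hab)

lemma abs_exp_sub_one_le_abs_mul_exp (x : ℝ) : |exp x - 1| ≤ |x| * exp |x| := by
  have h := Complex.norm_exp_sub_sum_le_norm_mul_exp x 1
  simp only [Finset.sum_range_one, pow_zero, Nat.factorial_zero, Nat.cast_one, div_one, pow_one,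
    Complex.norm_real, norm_eq_abs] at h
  exact_mod_cast h

end Calculus

section Hyperbolic

lemma hasDerivAt_tanh (u : ℝ) : HasDerivAt tanh (1 - tanh u ^ 2) u := by
  have hc := cosh_pos u
  have h := (hasDerivAt_sinh u).div (hasDerivAt_cosh u) hc.ne'
  rw [show sinh / cosh = tanh from funext fun v => (tanh_eq_sinh_div_cosh v).symm] at h
  refine h.congr_deriv ?_
  rw [tanh_eq_sinh_div_cosh]
  field_simp

lemma hasDerivAt_sinh_two_mul (u : ℝ) :
    HasDerivAt (fun v => sinh (2 * v)) (2 * cosh (2 * u)) u := by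
  simpa [mul_comm] using ((hasDerivAt_id u).const_mul 2).sinh

lemma hasDerivAt_coth {u : ℝ} (hu : u ≠ 0) :
    HasDerivAt (fun v => cosh v / sinh v) (-1 / sinh u ^ 2) u := by
  refine ((hasDerivAt_cosh u).div (hasDerivAt_sinh u) (sinh_ne_zero.mpr hu)).congr_deriv ?_
  congr 1
  linear_combination -cosh_sq u

lemma two_mul_sinh_mul_exp_neg (u : ℝ) : 2 * sinh u * exp (-u) = 1 - exp (-u) ^ 2 := by
  have h : exp u * exp (-u) = 1 := by rw [← exp_add, add_neg_cancel, exp_zero]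
  rw [sinh_eq]
  linear_combination h

lemma two_mul_cosh_mul_exp_neg (u : ℝ) : 2 * cosh u * exp (-u) = 1 + exp (-u) ^ 2 := by
  have h : exp u * exp (-u) = 1 := by rw [← exp_add, add_neg_cancel, exp_zero]
  rw [cosh_eq]
  linear_combination h

lemma tendsto_two_mul_sinh_mul_exp_neg :
    Tendsto (fun u : ℝ => 2 * sinh u * exp (-u)) atTop (𝓝 1) := by
  simpa [two_mul_sinh_mul_exp_neg] using (tendsto_exp_neg_atTop_nhds_zero.pow 2).const_sub 1

lemma tendsto_two_mul_cosh_mul_exp_neg :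
    Tendsto (fun u : ℝ => 2 * cosh u * exp (-u)) atTop (𝓝 1) := by
  simpa [two_mul_cosh_mul_exp_neg] using (tendsto_exp_neg_atTop_nhds_zero.pow 2).const_add 1

lemma tendsto_coth_atTop : Tendsto (fun u : ℝ => cosh u / sinh u) atTop (𝓝 1) := by
  have h := tendsto_two_mul_cosh_mul_exp_neg.div tendsto_two_mul_sinh_mul_exp_neg one_ne_zero
  rw [div_one] at h
  refine h.congr fun u => ?_
  rw [Pi.div_apply, mul_div_mul_right _ _ (exp_ne_zero _), mul_div_mul_left _ _ two_ne_zero]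

lemma coth_sub_one_le_inv {u : ℝ} (hu : 0 < u) : cosh u / sinh u - 1 ≤ u⁻¹ := by
  have hs : 0 < sinh u := sinh_pos_iff.mpr hu
  calc cosh u / sinh u - 1 = exp (-u) / sinh u := by rw [div_sub_one hs.ne', cosh_sub_sinh]
    _ ≤ 1 / u := div_le_div₀ zero_le_one (exp_le_one_iff.mpr (by linarith)) hu
        (self_le_sinh_iff.mpr hu.le)
    _ = u⁻¹ := one_div u

end Hyperbolic

section Riccati

/-- Second-order WKB term `g` for the Riccati equation `φ' = 2 coth u ((κ sinh 2u)² - φ²)`: its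
nonnegative solutions are `κ sinh 2u - g(u)` up to a smaller error. -/
noncomputable def wkbCorrection (u : ℝ) : ℝ := (1 + tanh u ^ 2) / 4

/-- The error `φ - (κ sinh 2u - g)` of the second-order WKB approximation, multiplied by
`κ sinh 2u`; in this scaling it is bounded uniformly in `κ`. -/
noncomputable def wkbRemainder (κ : ℝ) (φ : ℝ → ℝ) (u : ℝ) : ℝ :=
  (φ u - κ * sinh (2 * u) + wkbCorrection u) * (κ * sinh (2 * u))

/-- The right-hand side `F` of the equation `E' = 2 coth u · F` satisfied by the rescaled WKB
error `e = E(u)`, where `Q = κ sinh 2u`, `g` is the WKB correction and `t = g' / (2 coth u)`. -/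
noncomputable def remainderDrift (Q g t e : ℝ) : ℝ :=
  Q * (t - g ^ 2) - 2 * (Q - 2 * g) * e - e ^ 2 / Q

lemma wkbCorrection_mem_Icc (u : ℝ) : wkbCorrection u ∈ Icc (1 / 4) (1 / 2) := by
  have := sq_nonneg (tanh u)
  have := tanh_sq_lt_one u
  constructor <;> unfold wkbCorrection <;> linarith

lemma hasDerivAt_wkbCorrection (u : ℝ) :
    HasDerivAt wkbCorrection (tanh u * (1 - tanh u ^ 2) / 2) u :=
  ((((hasDerivAt_tanh u).pow 2).const_add 1).div_const 4).congr_deriv (by ring)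

variable {κ : ℝ} {φ : ℝ → ℝ}

lemma hasDerivAt_wkbRemainder {u : ℝ} (hκ : κ ≠ 0) (hu : u ≠ 0)
    (hφ : HasDerivAt φ (2 * (cosh u / sinh u) * ((κ * sinh (2 * u)) ^ 2 - φ u ^ 2)) u) :
    HasDerivAt (wkbRemainder κ φ)
      (2 * (cosh u / sinh u) * remainderDrift (κ * sinh (2 * u)) (wkbCorrection u)
        (tanh u ^ 2 * (1 - tanh u ^ 2) / 4) (wkbRemainder κ φ u)) u := by
  have hs : sinh u ≠ 0 := sinh_ne_zero.mpr hu
  have hc : cosh u ≠ 0 := (cosh_pos u).ne'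
  have hs₂ : sinh (2 * u) ≠ 0 := sinh_ne_zero.mpr (by simpa using hu)
  have deriv_root : κ * (2 * cosh (2 * u)) =
      2 * (cosh u / sinh u) * (2 * wkbCorrection u * (κ * sinh (2 * u))) := by
    rw [wkbCorrection, tanh_eq_sinh_div_cosh, sinh_two_mul, cosh_two_mul]
    field_simp
    norm_num
  have deriv_correction : tanh u * (1 - tanh u ^ 2) / 2 =
      2 * (cosh u / sinh u) * (tanh u ^ 2 * (1 - tanh u ^ 2) / 4) := by
    rw [tanh_eq_sinh_div_cosh]
    field_simp
    norm_num
  have hroot := (hasDerivAt_sinh_two_mul u).const_mul κ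
  rw [deriv_root] at hroot
  have hcorr := hasDerivAt_wkbCorrection u
  rw [deriv_correction] at hcorr
  refine (((hφ.sub hroot).add hcorr).mul hroot).congr_deriv ?_
  simp only [remainderDrift, wkbRemainder, Pi.add_apply, Pi.sub_apply]
  field_simp [hs₂]
  ring

lemma remainderDrift_one_neg {Q g t : ℝ} (hQ : 0 < Q) (hg : g ≤ 1 / 2) (ht : t ≤ g ^ 2) :
    remainderDrift Q g t 1 < 0 := by
  have amgm : 2 ≤ Q + 1 / Q := by
    have : Q + 1 / Q - 2 = (Q - 1) ^ 2 / Q := by field_simp; ring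
    have : 0 ≤ (Q - 1) ^ 2 / Q := by positivity
    linarith
  have : Q * (t - g ^ 2) ≤ 0 := mul_nonpos_of_nonneg_of_nonpos hQ.le (by linarith)
  unfold remainderDrift
  linarith

-- Nonnegativity of the solution `Q - g + e / Q` excludes the level `e = -9` unless `3 ≤ Q`.
lemma remainderDrift_neg_nine_pos {Q g t : ℝ} (hQ : 0 < Q) (hg₀ : 0 ≤ g) (hg : g ≤ 1 / 2)
    (ht : 0 ≤ t) (hφ : 0 ≤ Q - g - 9 / Q) : 0 < remainderDrift Q g t (-9) := by
  have three_le : 3 ≤ Q := by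
    have : 9 ≤ Q * Q := by
      rw [← div_le_iff₀ hQ]
      linarith
    nlinarith
  have hdiv : 81 / Q ≤ 27 := by
    rw [div_le_iff₀ hQ]
    linarith
  have hg_sq : g ^ 2 ≤ 1 / 4 := by nlinarith
  have : Q * (-(1 / 4)) ≤ Q * (t - g ^ 2) := mul_le_mul_of_nonneg_left (by linarith) hQ.le
  unfold remainderDrift
  linarith

lemma tendsto_wkbRemainder_nhdsGT_zero (hφ : ContinuousAt φ 0) :
    Tendsto (wkbRemainder κ φ) (𝓝[>] 0) (𝓝 0) := by
  have hroot : ContinuousAt (fun v => κ * sinh (2 * v)) 0 := by fun_prop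
  have hcont : ContinuousAt (wkbRemainder κ φ) 0 :=
    ((hφ.sub hroot).add (hasDerivAt_wkbCorrection 0).continuousAt).mul hroot
  have h := hcont.tendsto.mono_left (nhdsWithin_le_nhds (s := Ioi 0))
  rwa [show wkbRemainder κ φ 0 = 0 by simp [wkbRemainder]] at h

theorem wkbRemainder_le_one (hκ : 0 < κ) (hφ_zero : ContinuousAt φ 0)
    (hφ : ∀ u, 0 < u →
      HasDerivAt φ (2 * (cosh u / sinh u) * ((κ * sinh (2 * u)) ^ 2 - φ u ^ 2)) u)
    {u : ℝ} (hu : 0 < u) : wkbRemainder κ φ u ≤ 1 := by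
  refine le_of_hasDerivAt_of_deriv_neg_of_eq
    (fun v hv => hasDerivAt_wkbRemainder hκ.ne' hv.ne' (hφ v hv))
    ((tendsto_wkbRemainder_nhdsGT_zero hφ_zero).eventually_le_const one_pos)
    (fun v hv hv_one => ?_) hu
  have root_pos : 0 < κ * sinh (2 * v) := mul_pos hκ (sinh_pos_iff.mpr (by positivity))
  have coth_pos : 0 < 2 * (cosh v / sinh v) :=
    mul_pos two_pos (div_pos (cosh_pos v) (sinh_pos_iff.mpr hv))
  have drift_coeff_le : tanh v ^ 2 * (1 - tanh v ^ 2) / 4 ≤ wkbCorrection v ^ 2 := by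
    unfold wkbCorrection
    nlinarith [sq_nonneg (tanh v ^ 2)]
  rw [hv_one]
  exact mul_neg_of_pos_of_neg coth_pos
    (remainderDrift_one_neg root_pos (wkbCorrection_mem_Icc v).2 drift_coeff_le)

theorem neg_nine_le_wkbRemainder (hκ : 0 < κ) (hφ_zero : ContinuousAt φ 0)
    (hφ_nonneg : ∀ u, 0 < u → 0 ≤ φ u)
    (hφ : ∀ u, 0 < u →
      HasDerivAt φ (2 * (cosh u / sinh u) * ((κ * sinh (2 * u)) ^ 2 - φ u ^ 2)) u)
    {u : ℝ} (hu : 0 < u) : -9 ≤ wkbRemainder κ φ u := by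
  suffices h : (-wkbRemainder κ φ) u ≤ 9 from neg_le.mp h
  refine le_of_hasDerivAt_of_deriv_neg_of_eq
    (fun v hv => (hasDerivAt_wkbRemainder hκ.ne' hv.ne' (hφ v hv)).neg)
    ((tendsto_wkbRemainder_nhdsGT_zero hφ_zero).neg.eventually_le_const (by norm_num))
    (fun v hv hv_nine => ?_) hu
  have root_pos : 0 < κ * sinh (2 * v) := mul_pos hκ (sinh_pos_iff.mpr (by positivity))
  have coth_pos : 0 < 2 * (cosh v / sinh v) :=
    mul_pos two_pos (div_pos (cosh_pos v) (sinh_pos_iff.mpr hv))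
  have hg := wkbCorrection_mem_Icc v
  have hE : wkbRemainder κ φ v = -9 := neg_eq_iff_eq_neg.mp hv_nine
  have hφv : φ v = κ * sinh (2 * v) - wkbCorrection v - 9 / (κ * sinh (2 * v)) := by
    linear_combination (eq_div_iff root_pos.ne').mpr hE
  have drift_coeff_nonneg : 0 ≤ tanh v ^ 2 * (1 - tanh v ^ 2) / 4 := by
    have := (tanh_sq_lt_one v).le
    exact div_nonneg (mul_nonneg (sq_nonneg _) (sub_nonneg.mpr this)) (by norm_num)
  rw [hE]
  exact neg_lt_zero.mpr (mul_pos coth_pos (remainderDrift_neg_nine_pos root_pos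
    (by linarith [hg.1]) hg.2 drift_coeff_nonneg (hφv ▸ hφ_nonneg v hv)))

end Riccati

section NormRatio

lemma hasDerivAt_half_add_log_eval_negLaguerre (k : ℕ) {x : ℝ} (hx : 0 < x) :
    HasDerivAt (fun y => y / 2 + log ((negLaguerre k).eval y)) (laguerreEulerDeriv k x / x) x := by
  have hP : 0 < (negLaguerre k).eval x := one_pos.trans_le (one_le_eval_negLaguerre k hx.le)
  refine (((hasDerivAt_id x).div_const 2).add
    (((negLaguerre k).hasDerivAt x).log hP.ne')).congr_deriv ?_
  unfold laguerreEulerDeriv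
  field_simp

lemma hasDerivAt_mul_sinh_sq (c u : ℝ) :
    HasDerivAt (fun v => c * sinh v ^ 2) (2 * c * sinh u * cosh u) u :=
  (((hasDerivAt_sinh u).pow 2).const_mul c).congr_deriv (by ring)

lemma hasDerivAt_laguerreEulerDeriv_mul_sinh_sq (k : ℕ) {u : ℝ} (hu : 0 < u) :
    HasDerivAt (fun v => laguerreEulerDeriv k (4 * (k + 1 / 2) * sinh v ^ 2))
      (2 * (cosh u / sinh u) * (((k + 1 / 2) * sinh (2 * u)) ^ 2 -
        laguerreEulerDeriv k (4 * (k + 1 / 2) * sinh u ^ 2) ^ 2)) u := by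
  have hs : sinh u ≠ 0 := sinh_ne_zero.mpr hu.ne'
  have hx : 0 < 4 * ((k : ℝ) + 1 / 2) * sinh u ^ 2 := by positivity
  refine ((hasDerivAt_laguerreEulerDeriv k hx).comp u
    (hasDerivAt_mul_sinh_sq _ u)).congr_deriv ?_
  rw [sinh_two_mul, mul_pow _ (2 * sinh u * cosh u), mul_pow _ (cosh u), cosh_sq]
  field_simp
  ring

/-- The rescaled WKB error of `u ↦ laguerreEulerDeriv k (4 κ sinh² u)`, where `κ = k + 1/2`. -/
noncomputable def laguerreWkbRemainder (k : ℕ) : ℝ → ℝ :=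
  wkbRemainder (k + 1 / 2) fun u => laguerreEulerDeriv k (4 * (k + 1 / 2) * sinh u ^ 2)

lemma abs_laguerreWkbRemainder_le (k : ℕ) {u : ℝ} (hu : 0 < u) :
    |laguerreWkbRemainder k u| ≤ 9 := by
  have hκ : (0 : ℝ) < k + 1 / 2 := by positivity
  have nonneg : ∀ v, 0 ≤ 4 * ((k : ℝ) + 1 / 2) * sinh v ^ 2 := fun v => by positivity
  have cont : ContinuousAt (fun v => laguerreEulerDeriv k (4 * (k + 1 / 2) * sinh v ^ 2)) 0 :=
    ContinuousAt.comp (f := fun v => 4 * ((k : ℝ) + 1 / 2) * sinh v ^ 2)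
      (continuousAt_laguerreEulerDeriv k (nonneg 0)) (by fun_prop)
  have deriv := fun v (hv : 0 < v) => hasDerivAt_laguerreEulerDeriv_mul_sinh_sq k hv
  exact abs_le.mpr
    ⟨neg_nine_le_wkbRemainder hκ cont (fun v _ => laguerreEulerDeriv_nonneg k (nonneg v)) deriv hu,
      (wkbRemainder_le_one hκ cont deriv hu).trans (by norm_num)⟩

/-- The logarithm of the ratio of `e^{2κ sinh² u} L_k(-4κ sinh² u)` to its leading asymptotics
`(4πκ sinh 2u)^{-1/2} e^{κ(2u + sinh 2u)}`, where `κ = k + 1/2`. -/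
noncomputable def logNormRatio (k : ℕ) (u : ℝ) : ℝ :=
  2 * (k + 1 / 2) * sinh u ^ 2 + log ((negLaguerre k).eval (4 * (k + 1 / 2) * sinh u ^ 2)) +
    log (4 * π * (k + 1 / 2) * sinh (2 * u)) / 2 - (k + 1 / 2) * (2 * u + sinh (2 * u))

lemma exp_logNormRatio (k : ℕ) {u : ℝ} (hu : 0 < u) :
    exp (logNormRatio k u) =
      exp (2 * (k + 1 / 2) * sinh u ^ 2) * Lag k (-4 * (k + 1 / 2) * sinh u ^ 2) *
        √(4 * π * (k + 1 / 2) * sinh (2 * u)) *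
        exp (-(k + 1 / 2) * (2 * u + sinh (2 * u))) := by
  have hP : 1 ≤ (negLaguerre k).eval (4 * (k + 1 / 2) * sinh u ^ 2) :=
    one_le_eval_negLaguerre k (by positivity)
  have hroot : 0 < 4 * π * (k + 1 / 2) * sinh (2 * u) :=
    mul_pos (by positivity) (sinh_pos_iff.mpr (by positivity))
  rw [logNormRatio, sub_eq_add_neg, exp_add, exp_add, exp_add, exp_log (by linarith),
    ← log_sqrt hroot.le, exp_log (sqrt_pos.mpr hroot), eval_negLaguerre]
  simp only [neg_mul]

lemma hasDerivAt_logNormRatio (k : ℕ) {u : ℝ} (hu : 0 < u) :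
    HasDerivAt (logNormRatio k) (laguerreWkbRemainder k u / ((k + 1 / 2) * sinh u ^ 2)) u := by
  have hs : sinh u ≠ 0 := sinh_ne_zero.mpr hu.ne'
  have hs₂ : sinh (2 * u) ≠ 0 := sinh_ne_zero.mpr (by positivity)
  have hx : 0 < 4 * ((k : ℝ) + 1 / 2) * sinh u ^ 2 := by positivity
  have polynomial_part := (hasDerivAt_half_add_log_eval_negLaguerre k hx).comp u
    (hasDerivAt_mul_sinh_sq (4 * (k + 1 / 2)) u)
  have root_part := (((hasDerivAt_sinh_two_mul u).const_mul (4 * π * (k + 1 / 2))).log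
    (mul_ne_zero (by positivity) hs₂)).div_const 2
  have two_add_two_mul_cosh : 2 * 1 + 2 * cosh (2 * u) = 4 * cosh u ^ 2 := by
    rw [cosh_two_mul]
    linear_combination -2 * cosh_sq u
  have exponential_part := (((hasDerivAt_id u).const_mul 2).add
    (hasDerivAt_sinh_two_mul u)).const_mul ((k : ℝ) + 1 / 2)
  refine (((polynomial_part.add root_part).sub exponential_part).congr_of_eventuallyEq
    (.of_forall fun v => ?_)).congr_deriv ?_
  · simp only [logNormRatio, Function.comp_apply, Pi.add_apply, Pi.sub_apply, id_eq]
    ring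
  · simp only [laguerreWkbRemainder, wkbRemainder, wkbCorrection, tanh_eq_sinh_div_cosh]
    rw [two_add_two_mul_cosh, sinh_two_mul, cosh_two_mul]
    field_simp
    ring

/-- The limit of `logNormRatio k u` as `u → ∞`: the logarithmic error of Stirling's formula in the
form `k! ≈ √(2π) κ^κ e^{-κ}`, where `κ = k + 1/2`. -/
noncomputable def stirlingDefect (k : ℕ) : ℝ :=
  (k + 1 / 2) * log (k + 1 / 2) - (k + 1 / 2) + log (2 * π) / 2 - log k.factorial

lemma logNormRatio_eq_log_div_pow (k : ℕ) {u : ℝ} (hu : 0 < u) :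
    logNormRatio k u =
      log ((negLaguerre k).eval (4 * (k + 1 / 2) * sinh u ^ 2) /
          (4 * (k + 1 / 2) * sinh u ^ 2) ^ k) +
        (k + 1 / 2) * log (k + 1 / 2) + log (2 * π) / 2 +
        (2 * k + 1 / 2) * log (2 * sinh u * exp (-u)) + log (2 * cosh u * exp (-u)) / 2 -
        (k + 1 / 2) * (2 * sinh u * exp (-u)) := by
  have hs : 0 < sinh u := sinh_pos_iff.mpr hu
  have hc : 0 < cosh u := cosh_pos u
  have hκ : (0 : ℝ) < k + 1 / 2 := by positivity
  have hP : 0 < (negLaguerre k).eval (4 * (k + 1 / 2) * sinh u ^ 2) :=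
    one_pos.trans_le (one_le_eval_negLaguerre k (by positivity))
  have log_sinh : log (2 * sinh u * exp (-u)) = log 2 + log (sinh u) - u := by
    rw [log_mul (by positivity) (exp_ne_zero _), log_mul two_ne_zero hs.ne', log_exp]
    ring
  have log_cosh : log (2 * cosh u * exp (-u)) = log 2 + log (cosh u) - u := by
    rw [log_mul (by positivity) (exp_ne_zero _), log_mul two_ne_zero hc.ne', log_exp]
    ring
  have log_arg : log (4 * (k + 1 / 2) * sinh u ^ 2) =
      2 * log 2 + log (k + 1 / 2) + 2 * log (sinh u) := by
    rw [show 4 * ((k : ℝ) + 1 / 2) * sinh u ^ 2 = 2 ^ 2 * (k + 1 / 2) * sinh u ^ 2 by norm_num,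
      log_mul (by positivity) (by positivity), log_mul (by positivity) hκ.ne', log_pow, log_pow]
    norm_num
  have log_root : log (4 * π * (k + 1 / 2) * sinh (2 * u)) =
      log (2 * π) + log (k + 1 / 2) + 2 * log 2 + log (sinh u) + log (cosh u) := by
    rw [sinh_two_mul, show 4 * π * ((k : ℝ) + 1 / 2) * (2 * sinh u * cosh u) =
        2 * π * (k + 1 / 2) * 2 ^ 2 * sinh u * cosh u by ring,
      log_mul (by positivity) hc.ne', log_mul (by positivity) hs.ne',
      log_mul (by positivity) (by positivity), log_mul (by positivity) hκ.ne', log_pow]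
    norm_num
  rw [logNormRatio, log_div hP.ne' (by positivity), log_pow, log_arg, log_root, log_sinh, log_cosh,
    ← cosh_sub_sinh, sinh_two_mul]
  ring

lemma tendsto_logNormRatio_atTop (k : ℕ) :
    Tendsto (logNormRatio k) atTop (𝓝 (stirlingDefect k)) := by
  have tendsto_arg : Tendsto (fun u => 4 * ((k : ℝ) + 1 / 2) * sinh u ^ 2) atTop atTop := by
    have : Tendsto sinh atTop atTop := tendsto_atTop_mono' _
      ((eventually_ge_atTop 0).mono fun u hu => self_le_sinh_iff.mpr hu) tendsto_id
    exact ((tendsto_pow_atTop two_ne_zero).comp this).const_mul_atTop (by positivity)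
  have hP := ((tendsto_eval_negLaguerre_div_pow k).comp tendsto_arg).log (by positivity)
  have hS := tendsto_two_mul_sinh_mul_exp_neg
  have hC := tendsto_two_mul_cosh_mul_exp_neg
  have h := (((((hP.add_const ((k + 1 / 2) * log (k + 1 / 2))).add_const (log (2 * π) / 2)).add
    ((hS.log one_ne_zero).const_mul (2 * (k : ℝ) + 1 / 2))).add
    ((hC.log one_ne_zero).div_const 2)).sub (hS.const_mul ((k : ℝ) + 1 / 2)))
  have limit_eq : log (1 / k.factorial) + (k + 1 / 2) * log (k + 1 / 2) + log (2 * π) / 2 +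
      (2 * k + 1 / 2) * log 1 + log 1 / 2 - (k + 1 / 2) * 1 = stirlingDefect k := by
    rw [stirlingDefect, log_one, one_div, log_inv]
    ring
  rw [← limit_eq]
  exact h.congr' ((eventually_gt_atTop 0).mono fun u hu => (logNormRatio_eq_log_div_pow k hu).symm)

lemma abs_stirlingDefect_sub_logNormRatio_le (k : ℕ) {u : ℝ} (hu : 0 < u) :
    |stirlingDefect k - logNormRatio k u| ≤ 9 / ((k + 1 / 2) * u) := by
  have antideriv : ∀ v, u ≤ v → HasDerivAt (fun v => -(9 / ((k : ℝ) + 1 / 2)) * (cosh v / sinh v))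
      (9 / ((k + 1 / 2) * sinh v ^ 2)) v := fun v hv =>
    ((hasDerivAt_coth (hu.trans_le hv).ne').const_mul _).congr_deriv (by field_simp)
  calc |stirlingDefect k - logNormRatio k u|
    _ ≤ -(9 / (k + 1 / 2)) * 1 - -(9 / (k + 1 / 2)) * (cosh u / sinh u) :=
        norm_sub_le_of_norm_deriv_le_of_tendsto
          (fun v hv => hasDerivAt_logNormRatio k (hu.trans_le hv)) antideriv
          (fun v hv => ?_) (tendsto_logNormRatio_atTop k) (tendsto_coth_atTop.const_mul _)
    _ = 9 / (k + 1 / 2) * (cosh u / sinh u - 1) := by ring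
    _ ≤ 9 / (k + 1 / 2) * u⁻¹ :=
        mul_le_mul_of_nonneg_left (coth_sub_one_le_inv hu) (by positivity)
    _ = 9 / ((k + 1 / 2) * u) := by rw [← div_eq_mul_inv, div_div]
  have den_pos : 0 ≤ ((k : ℝ) + 1 / 2) * sinh v ^ 2 := by positivity
  rw [norm_eq_abs, abs_div, abs_of_nonneg den_pos]
  exact div_le_div_of_nonneg_right (abs_laguerreWkbRemainder_le k (hu.trans_le hv)) den_pos

end NormRatio

section Stirling

lemma log_stirlingSeq_sub_log_sqrt_pi_le {n : ℕ} (hn : n ≠ 0) :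
    log (Stirling.stirlingSeq n) - log √π ≤ 1 / (12 * n) := by
  have mono : MonotoneOn (fun m : ℕ => log (Stirling.stirlingSeq m) - 1 / (12 * m)) (Ici 1) := by
    refine monotoneOn_of_le_succ ordConnected_Ici fun m _ hm _ => ?_
    have hm : (0 : ℝ) < m := by exact_mod_cast hm
    have telescope : 1 / (12 * (m : ℝ) * (m + 1)) = 1 / (12 * m) - 1 / (12 * (m + 1)) := by
      field_simp
      ring
    have := Stirling.log_stirlingSeq_sdiff_le m
    simp only [Nat.succ_eq_succ, Nat.succ_eq_add_one, Nat.cast_add, Nat.cast_one]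
    linarith
  have lim : Tendsto (fun m : ℕ => log (Stirling.stirlingSeq m) - 1 / (12 * m)) atTop
      (𝓝 (log √π - 0)) :=
    (Stirling.tendsto_stirlingSeq_sqrt_pi.log (by positivity)).sub
      (tendsto_const_nhds.div_atTop (tendsto_natCast_atTop_atTop.const_mul_atTop (by norm_num)))
  have hn : 1 ≤ n := Nat.one_le_iff_ne_zero.mpr hn
  have := ge_of_tendsto lim ((eventually_ge_atTop n).mono fun m hm => mono hn (hn.trans hm) hm)
  linarith

lemma log_sqrt_pi_le_log_stirlingSeq {n : ℕ} (hn : n ≠ 0) :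
    log √π ≤ log (Stirling.stirlingSeq n) :=
  log_le_log (by positivity) (Stirling.sqrt_pi_le_stirlingSeq hn)

lemma one_half_le_add_one_half_mul_log {x : ℝ} (hx : 0 < x) :
    1 / 2 ≤ (x + 1 / 2) * log (1 + 1 / (2 * x)) := by
  have h := one_sub_inv_le_log_of_pos (show 0 < 1 + 1 / (2 * x) by positivity)
  calc 1 / 2 = (x + 1 / 2) * (1 - (1 + 1 / (2 * x))⁻¹) := by field_simp; ring
    _ ≤ _ := by gcongr

lemma add_one_half_mul_log_le {x : ℝ} (hx : 0 < x) :
    (x + 1 / 2) * log (1 + 1 / (2 * x)) ≤ 1 / 2 + 1 / (4 * x) := by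
  have h := log_le_sub_one_of_pos (show 0 < 1 + 1 / (2 * x) by positivity)
  calc (x + 1 / 2) * log (1 + 1 / (2 * x)) ≤ (x + 1 / 2) * (1 + 1 / (2 * x) - 1) := by gcongr
    _ = 1 / 2 + 1 / (4 * x) := by field_simp; ring

lemma stirlingDefect_eq_log_stirlingSeq {k : ℕ} (hk : k ≠ 0) :
    stirlingDefect k = log √π - log (Stirling.stirlingSeq k) +
      ((k + 1 / 2) * log (1 + 1 / (2 * k)) - 1 / 2) := by
  have hk : (0 : ℝ) < k := by exact_mod_cast hk.bot_lt
  have log_shift : log (1 + 1 / (2 * (k : ℝ))) = log (k + 1 / 2) - log k := by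
    rw [← log_div (by positivity) hk.ne']
    congr 1
    field_simp
  rw [stirlingDefect, Stirling.log_stirlingSeq_formula, log_shift, log_sqrt pi_pos.le,
    log_mul two_ne_zero pi_ne_zero, log_mul two_ne_zero hk.ne', log_div hk.ne' (exp_ne_zero _),
    log_exp]
  ring

lemma abs_stirlingDefect_le {k : ℕ} (hk : k ≠ 0) : |stirlingDefect k| ≤ 1 / (4 * k) := by
  have hk₀ : (0 : ℝ) < k := by exact_mod_cast hk.bot_lt
  have : 1 / (12 * (k : ℝ)) ≤ 1 / (4 * k) := by gcongr; norm_num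
  rw [stirlingDefect_eq_log_stirlingSeq hk, abs_le]
  constructor <;> linarith [log_stirlingSeq_sub_log_sqrt_pi_le hk,
    log_sqrt_pi_le_log_stirlingSeq hk, one_half_le_add_one_half_mul_log hk₀,
    add_one_half_mul_log_le hk₀]

end Stirling

theorem abs_logNormRatio_le {k : ℕ} (hk : k ≠ 0) {u : ℝ} (hu : 0 < u) :
    |logNormRatio k u| ≤ 9 / ((k + 1 / 2) * u) + 1 / (4 * k) := by
  have h := abs_sub_abs_le_abs_sub (logNormRatio k u) (stirlingDefect k)
  rw [abs_sub_comm] at h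
  linarith [abs_stirlingDefect_sub_logNormRatio_le k hu, abs_stirlingDefect_le hk]

lemma abs_logNormRatio_le_mul_rpow {c p q : ℝ} (hc : 0 < c) (hp : p ≤ 1) (hpq : p + q ≤ 1)
    {k : ℕ} (hk : k ≠ 0) {u : ℝ} (hu : c * ((k : ℝ) + 1 / 2) ^ (-q) ≤ u) :
    |logNormRatio k u| ≤ (9 / c + 1) * ((k : ℝ) + 1 / 2) ^ (-p) := by
  have hk_one : (1 : ℝ) ≤ k := by exact_mod_cast Nat.one_le_iff_ne_zero.mpr hk
  set κ : ℝ := k + 1 / 2 with hκ_def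
  have hκ : 1 ≤ κ := by linarith
  have hκ₀ : 0 < κ := by linarith
  have main_term : 9 / (κ * u) ≤ 9 / c * κ ^ (-p) :=
    calc 9 / (κ * u) ≤ 9 / (κ * (c * κ ^ (-q))) := by gcongr
      _ = 9 / c * κ ^ (q - 1) := by
        rw [rpow_sub_one hκ₀.ne', rpow_neg hκ₀.le]
        field_simp
      _ ≤ 9 / c * κ ^ (-p) := by gcongr; linarith
  have stirling_term : 1 / (4 * (k : ℝ)) ≤ κ ^ (-p) :=
    calc 1 / (4 * (k : ℝ)) ≤ 1 / κ := by gcongr; linarith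
      _ = κ ^ (-1 : ℝ) := by rw [rpow_neg_one, one_div]
      _ ≤ κ ^ (-p) := by gcongr
  have hu₀ : 0 < u := (by positivity : 0 < c * κ ^ (-q)).trans_le hu
  linarith [abs_logNormRatio_le hk hu₀]

theorem projection_norm_sharp_asymptotics_general {c p q : ℝ} (hc : 0 < c) (hp₀ : 0 ≤ p)
    (hp : p ≤ 1) (hpq : p + q ≤ 1) :
    ∃ C : ℝ, 0 < C ∧ ∀ k : ℕ, k ≠ 0 → ∀ u : ℝ, c * ((k : ℝ) + 1 / 2) ^ (-q) ≤ u →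
      |exp (2 * ((k : ℝ) + 1 / 2) * sinh u ^ 2) * Lag k (-4 * ((k : ℝ) + 1 / 2) * sinh u ^ 2) *
          √(4 * π * ((k : ℝ) + 1 / 2) * sinh (2 * u)) *
          exp (-((k : ℝ) + 1 / 2) * (2 * u + sinh (2 * u))) - 1| ≤
        C * ((k : ℝ) + 1 / 2) ^ (-p) := by
  refine ⟨(9 / c + 1) * exp (9 / c + 1), by positivity, fun k hk u hu => ?_⟩
  have hκ : (1 : ℝ) ≤ k + 1 / 2 := by
    have : (1 : ℝ) ≤ k := by exact_mod_cast Nat.one_le_iff_ne_zero.mpr hk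
    linarith
  have hu₀ : 0 < u := (by positivity : 0 < c * ((k : ℝ) + 1 / 2) ^ (-q)).trans_le hu
  have h := abs_logNormRatio_le_mul_rpow hc hp hpq hk hu
  have h_bounded : |logNormRatio k u| ≤ 9 / c + 1 := h.trans <|
    mul_le_of_le_one_right (by positivity) (rpow_le_one_of_one_le_of_nonpos hκ (by linarith))
  rw [← exp_logNormRatio k hu₀]
  calc |exp (logNormRatio k u) - 1|
    _ ≤ |logNormRatio k u| * exp |logNormRatio k u| := abs_exp_sub_one_le_abs_mul_exp _
    _ ≤ (9 / c + 1) * ((k : ℝ) + 1 / 2) ^ (-p) * exp (9 / c + 1) := by gcongr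
    _ = (9 / c + 1) * exp (9 / c + 1) * ((k : ℝ) + 1 / 2) ^ (-p) := by ring

/-- Sharp Laplace-method asymptotics: for `p₁, p₂ > 0` with `p₁ + p₂ < 1/2`, there are
`K, C > 0` such that for `k ≥ K` and `(3/8) k₁^{-2p₂} ≤ u ≤ p₂ log k₁` (with `k₁ = k + 1/2`),
the spectral projection norm `e^{2k₁ sinh²u} L_k(-4k₁ sinh²u)` equals
`(4π k₁ sinh 2u)^{-1/2} e^{k₁(2u + sinh 2u)}` up to a relative error `≤ C k₁^{-p₁}`. -/
theorem projection_norm_sharp_asymptotics (p₁ p₂ : ℝ) (hp₁ : 0 < p₁) (hp₂ : 0 < p₂)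
    (hsum : p₁ + p₂ < 1 / 2) :
    ∃ K C : ℝ, 0 < K ∧ 0 < C ∧ ∀ k : ℕ, K ≤ (k : ℝ) → ∀ u : ℝ,
      3 / 8 * ((k : ℝ) + 1 / 2) ^ (-(2 * p₂)) ≤ u →
      u ≤ p₂ * Real.log ((k : ℝ) + 1 / 2) →
      |Real.exp (2 * ((k : ℝ) + 1 / 2) * Real.sinh u ^ 2) *
          Lag k (-4 * ((k : ℝ) + 1 / 2) * Real.sinh u ^ 2) *
          Real.sqrt (4 * Real.pi * ((k : ℝ) + 1 / 2) * Real.sinh (2 * u)) *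
          Real.exp (-((k : ℝ) + 1 / 2) * (2 * u + Real.sinh (2 * u))) - 1| ≤
        C * ((k : ℝ) + 1 / 2) ^ (-p₁) := by
  obtain ⟨C, hC, h⟩ := projection_norm_sharp_asymptotics_general (c := 3 / 8) (q := 2 * p₂)
    (by norm_num) hp₁.le (by linarith) (by linarith)
  exact ⟨1, C, one_pos, hC, fun k hk u hu _ =>
    h k (Nat.one_le_iff_ne_zero.mp (by exact_mod_cast hk)) u hu⟩
end

section
/- Let k ∈ ℕ with k ≥ 1, let r, γ > 0, let A > 1, and let Θ ∈ (0, π/3]. Set T = Θ·√A/(1 + A) and A₁ = √(π/(k·r·γ))·(r + γ)^{2k+1}. If r/γ ∈ [1/A, A], then (cos Θ)^{1/2}·(1 − (1/(T·√(2πk)))·e^{−kT²/2}) ≤ (1/A₁)·∫_{−π}^{π} (r² + γ² + 2γr·cos θ)^k dθ ≤ (cos Θ)^{−1/2} + (2/3)·√(πk)·e^{−(9/π²)·kT²}. -/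
/-!
With `s = rγ / (r + γ)² ≤ 1 / 4`, and writing `κ` for the exponent, the integrand is
`(r + γ)^(2κ) (1 - s c²)^κ`, where `c = 2 sin (θ/2)` is a chord length.

Lower bound: `log (1 - x) ≥ -x / (1 - x)` and `c² ≤ θ²` give the Gaussian minorant
`exp (-κ s θ² / cos Θ)` on `[0, Θ]`, whose missing tail is at most a multiple of `φ(x) / x`.

Upper bound: `log (1 - x) ≤ -x` gives the majorant `exp (-κ s c²)`, and `c²` is at least
`cos Θ θ²` on `[0, Θ]`, `(9/π²) θ²` on `[0, π/3]` and `1` on `[π/3, π]`. The Gaussian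
`exp (-κ s cos Θ θ²)` yields the term `(cos Θ)^(-1/2)`; the excess of `exp (-κ s (9/π²) θ²)` over
it on `[Θ, π/3]` is at most `E - exp (-κ s)` with `E = exp (-κ s (9/π²) Θ²)`, so that everything
else contributes at most `(π/3) (E - exp (-κ s)) + (2π/3) exp (-κ s) ≤ (2π/3) E`.
-/

open MeasureTheory Set Real Filter
open scoped Topology

theorem mul_sin_le_mul_sin {x a : ℝ} (hx : 0 ≤ x) (hxa : x ≤ a) (ha : a ≤ π) :
    x * sin a ≤ a * sin x := by
  obtain rfl | ha₀ := (hx.trans hxa).eq_or_lt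
  · simp [le_antisymm hxa hx]
  have hconc := strictConcaveOn_sin_Icc.concaveOn.2
    (left_mem_Icc.2 pi_pos.le) ⟨ha₀.le, ha⟩ (sub_nonneg.2 ((div_le_one ha₀).2 hxa))
    (div_nonneg hx ha₀.le) (sub_add_cancel 1 (x / a))
  simp only [smul_eq_mul, sin_zero, mul_zero, zero_add, div_mul_cancel₀ x ha₀.ne'] at hconc
  calc x * sin a = a * (x / a * sin a) := by field_simp
    _ ≤ a * sin x := by gcongr

theorem mul_cos_le_sin {x : ℝ} (hx₀ : 0 ≤ x) (hx : x ≤ π / 2) : x * cos x ≤ sin x := by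
  obtain rfl | hx := hx.eq_or_lt
  · simp
  have hcos : 0 < cos x := cos_pos_of_mem_Ioo ⟨by linarith [pi_pos], hx⟩
  rw [← le_div_iff₀ hcos, ← tan_eq_sin_div_cos]
  exact le_tan hx₀ hx

/-- The length `2 sin (θ/2) = |1 - e^{iθ}|` of the chord subtended by the angle `θ` in the unit
circle, signed when `θ` is not in `[0, 2π]`. -/
noncomputable def chord (θ : ℝ) : ℝ := 2 * sin (θ / 2)

theorem chord_sq (θ : ℝ) : chord θ ^ 2 = 2 * (1 - cos θ) := by
  rw [chord, mul_pow, sin_sq_eq_half_sub, mul_div_cancel₀ θ two_ne_zero]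
  ring

theorem chord_sq_le_sq (θ : ℝ) : chord θ ^ 2 ≤ θ ^ 2 := by
  rw [chord_sq]
  linarith [one_sub_sq_div_two_le_cos (x := θ)]

theorem cos_mul_sq_le_chord_sq {θ Θ : ℝ} (hθ : 0 ≤ θ) (hθΘ : θ ≤ Θ) (hΘ : Θ ≤ π) :
    cos Θ * θ ^ 2 ≤ chord θ ^ 2 := by
  have hcos : cos Θ ≤ cos (θ / 2) ^ 2 := by
    rw [cos_sq, mul_div_cancel₀ θ two_ne_zero]
    linarith [cos_le_cos_of_nonneg_of_le_pi hθ hΘ hθΘ, cos_le_one θ]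
  have hcos₀ : 0 ≤ cos (θ / 2) := cos_nonneg_of_mem_Icc ⟨by linarith, by linarith⟩
  calc cos Θ * θ ^ 2 ≤ cos (θ / 2) ^ 2 * θ ^ 2 := by gcongr
    _ = (2 * (θ / 2 * cos (θ / 2))) ^ 2 := by ring
    _ ≤ chord θ ^ 2 := by
      unfold chord
      gcongr
      exact mul_cos_le_sin (by linarith) (by linarith)

theorem nine_div_pi_sq_mul_sq_le_chord_sq {θ : ℝ} (hθ : 0 ≤ θ) (hθ' : θ ≤ π / 3) :
    9 / π ^ 2 * θ ^ 2 ≤ chord θ ^ 2 := by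
  have hsin := mul_sin_le_mul_sin (x := θ / 2) (a := π / 6) (by linarith) (by linarith)
    (by linarith [pi_pos])
  rw [sin_pi_div_six] at hsin
  have hchord : 3 / π * θ ≤ chord θ := by
    rw [chord, div_mul_eq_mul_div, div_le_iff₀ pi_pos]
    linarith
  calc 9 / π ^ 2 * θ ^ 2 = (3 / π * θ) ^ 2 := by ring
    _ ≤ chord θ ^ 2 := by gcongr

theorem one_le_chord_sq {θ : ℝ} (hθ : π / 3 ≤ θ) (hθ' : θ ≤ π) : 1 ≤ chord θ ^ 2 := by
  have hcos := cos_le_cos_of_nonneg_of_le_pi (by positivity) hθ' hθ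
  rw [cos_pi_div_three] at hcos
  rw [chord_sq]
  linarith

theorem half_one_add_cos_le {s : ℝ} (hs : s ≤ 1 / 4) (θ : ℝ) :
    (1 + cos θ) / 2 ≤ 1 - s * chord θ ^ 2 := by
  have : s * chord θ ^ 2 ≤ 1 / 4 * chord θ ^ 2 := by gcongr
  linarith [chord_sq θ]

theorem one_sub_rpow_le_exp {x κ : ℝ} (hx : x ≤ 1) (hκ : 0 ≤ κ) :
    (1 - x) ^ κ ≤ exp (-(κ * x)) :=
  calc (1 - x) ^ κ ≤ exp (-x) ^ κ :=
        rpow_le_rpow (sub_nonneg.2 hx) (one_sub_le_exp_neg x) hκ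
    _ = exp (-(κ * x)) := by rw [← exp_mul]; ring_nf

theorem exp_le_one_sub_rpow {x κ : ℝ} (hx : x < 1) (hκ : 0 ≤ κ) :
    exp (-(κ * (x / (1 - x)))) ≤ (1 - x) ^ κ := by
  have hx' : 0 < 1 - x := sub_pos.2 hx
  have hlog : -(x / (1 - x)) ≤ log (1 - x) := by
    convert one_sub_inv_le_log_of_pos hx' using 1
    field_simp
    ring
  rw [rpow_def_of_pos hx', mul_comm (log _), ← mul_neg]
  gcongr

/-- The integrand `(r² + γ² + 2γr cos θ)^κ` divided by its maximum `(r + γ)^(2κ)`, in terms of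
the parameter `s = rγ / (r + γ)²`. -/
noncomputable def normalizedIntegrand (κ s θ : ℝ) : ℝ := (1 - s * chord θ ^ 2) ^ κ

section NormalizedIntegrand

variable {κ s θ Θ : ℝ}

theorem continuous_normalizedIntegrand (hκ : 0 ≤ κ) : Continuous (normalizedIntegrand κ s) := by
  unfold normalizedIntegrand chord
  fun_prop (disch := exact fun _ ↦ Or.inr hκ)

theorem normalizedIntegrand_neg (κ s θ : ℝ) :
    normalizedIntegrand κ s (-θ) = normalizedIntegrand κ s θ := by
  simp only [normalizedIntegrand, chord_sq, cos_neg]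

theorem one_sub_mul_chord_sq_nonneg (hs : s ≤ 1 / 4) (θ : ℝ) : 0 ≤ 1 - s * chord θ ^ 2 := by
  linarith [half_one_add_cos_le hs θ, neg_one_le_cos θ]

theorem normalizedIntegrand_nonneg (κ : ℝ) (hs : s ≤ 1 / 4) (θ : ℝ) :
    0 ≤ normalizedIntegrand κ s θ :=
  rpow_nonneg (one_sub_mul_chord_sq_nonneg hs θ) κ

theorem normalizedIntegrand_le_exp_of_le_chord_sq {v : ℝ} (hκ : 0 ≤ κ) (hs₀ : 0 ≤ s)
    (hs : s ≤ 1 / 4) (hv : v ≤ chord θ ^ 2) :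
    normalizedIntegrand κ s θ ≤ exp (-(κ * s * v)) :=
  calc normalizedIntegrand κ s θ ≤ exp (-(κ * (s * chord θ ^ 2))) :=
        one_sub_rpow_le_exp (sub_nonneg.1 (one_sub_mul_chord_sq_nonneg hs θ)) hκ
    _ ≤ exp (-(κ * s * v)) := by
      rw [← mul_assoc]
      gcongr

theorem exp_le_normalizedIntegrand (hκ : 0 ≤ κ) (hs₀ : 0 ≤ s) (hs : s ≤ 1 / 4) (hθ : 0 ≤ θ)
    (hθΘ : θ ≤ Θ) (hΘ : Θ < π / 2) :
    exp (-(κ * s / cos Θ) * θ ^ 2) ≤ normalizedIntegrand κ s θ := by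
  have hcos : 0 < cos Θ := cos_pos_of_mem_Ioo ⟨by linarith [pi_pos], hΘ⟩
  have hbase : cos Θ ≤ 1 - s * chord θ ^ 2 := by
    linarith [half_one_add_cos_le hs θ, cos_le_one Θ,
      cos_le_cos_of_nonneg_of_le_pi hθ (by linarith [pi_pos]) hθΘ]
  calc exp (-(κ * s / cos Θ) * θ ^ 2) = exp (-(κ * (s * θ ^ 2 / cos Θ))) := by ring_nf
    _ ≤ exp (-(κ * (s * chord θ ^ 2 / (1 - s * chord θ ^ 2)))) := by
      gcongr exp (-(κ * (s * ?_ / ?_)))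
      · exact chord_sq_le_sq θ
    _ ≤ normalizedIntegrand κ s θ := exp_le_one_sub_rpow (by linarith) hκ

end NormalizedIntegrand

theorem integral_exp_neg_mul_sq_le {b x : ℝ} (hb : 0 < b) (hx : 0 ≤ x) :
    ∫ t in 0..x, exp (-b * t ^ 2) ≤ √(π / b) / 2 := by
  rw [← integral_gaussian_Ioi, intervalIntegral.integral_of_le hx]
  exact setIntegral_mono_set (integrable_exp_neg_mul_sq hb).integrableOn
    (.of_forall fun t ↦ (exp_pos _).le) Ioc_subset_Ioi_self.eventuallyLE

/-- The majorant `φ(x) / x` of the upper tail of the standard normal distribution, where `φ` is its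
density. -/
noncomputable def millsBound (x : ℝ) : ℝ := 1 / (x * √(2 * π)) * exp (-x ^ 2 / 2)

theorem antitoneOn_millsBound : AntitoneOn millsBound (Ioi 0) := by
  intro x (hx : 0 < x) y _ hxy
  unfold millsBound
  gcongr

theorem tendsto_millsBound_atTop : Tendsto millsBound atTop (𝓝 0) := by
  have hbound : ∀ᶠ x in atTop, millsBound x ≤ (√(2 * π))⁻¹ * x⁻¹ := by
    filter_upwards [eventually_gt_atTop 0] with x hx
    calc millsBound x ≤ 1 / (x * √(2 * π)) * 1 := by
          unfold millsBound
          gcongr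
          exact exp_le_one_iff.2 (by linarith [sq_nonneg x])
      _ = (√(2 * π))⁻¹ * x⁻¹ := by rw [mul_one, one_div, mul_inv_rev]
  refine tendsto_of_tendsto_of_tendsto_of_le_of_le' tendsto_const_nhds
    (by simpa using tendsto_inv_atTop_zero.const_mul (√(2 * π))⁻¹) ?_ hbound
  filter_upwards [eventually_gt_atTop 0] with x hx
  unfold millsBound
  positivity

theorem hasDerivAt_millsBound {x : ℝ} (hx : x ≠ 0) :
    HasDerivAt millsBound (-((1 + 1 / x ^ 2) * exp (-x ^ 2 / 2) / √(2 * π))) x := by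
  have hinv : HasDerivAt (fun t ↦ 1 / (t * √(2 * π))) (-√(2 * π) / (x * √(2 * π)) ^ 2) x := by
    simpa only [one_div, one_mul] using!
      ((hasDerivAt_id x).mul_const √(2 * π)).fun_inv (by positivity)
  have hexp : HasDerivAt (fun t : ℝ ↦ exp (-t ^ 2 / 2)) (exp (-x ^ 2 / 2) * (-(2 * x) / 2)) x := by
    simpa using! ((hasDerivAt_pow 2 x).fun_neg.div_const 2).exp
  refine (hinv.mul hexp).congr_deriv ?_
  field_simp
  ring

/-- Says that `exp (-x ^ 2)` is at most `√π / 2` times the negated derivative of `millsBound`. -/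
theorem two_mul_sqrt_two_mul_exp_le {x : ℝ} (hx : x ≠ 0) :
    2 * √2 * exp (-x ^ 2 / 2) ≤ 1 + 1 / x ^ 2 := by
  have hexp : 1 + x ^ 2 / 2 ≤ exp (x ^ 2 / 2) := by linarith [add_one_le_exp (x ^ 2 / 2)]
  have hsqrt : √2 ≤ 3 / 2 := sqrt_le_iff.2 (by norm_num)
  have hquad : 2 * √2 * x ^ 2 ≤ (1 + x ^ 2) * (1 + x ^ 2 / 2) := by
    nlinarith [sq_nonneg (x ^ 2 - √2), sq_sqrt (zero_le_two (α := ℝ)), sq_nonneg x]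
  rw [neg_div, exp_neg, ← div_eq_mul_inv, div_le_iff₀ (exp_pos _)]
  calc 2 * √2 ≤ (1 + 1 / x ^ 2) * (1 + x ^ 2 / 2) := by
        rw [one_add_div (by positivity), div_mul_eq_mul_div, le_div_iff₀ (by positivity)]
        linarith
    _ ≤ (1 + 1 / x ^ 2) * exp (x ^ 2 / 2) := by gcongr

theorem integrable_exp_neg_sq : Integrable fun t : ℝ ↦ exp (-t ^ 2) := by
  simpa only [neg_one_mul] using integrable_exp_neg_mul_sq one_pos

theorem integral_Ioi_zero_exp_neg_sq : ∫ t in Ioi (0 : ℝ), exp (-t ^ 2) = √π / 2 := by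
  simpa only [neg_one_mul, div_one] using integral_gaussian_Ioi 1

theorem integral_Ioi_exp_neg_sq_le {x : ℝ} (hx : 0 < x) :
    ∫ t in Ioi x, exp (-t ^ 2) ≤ √π / 2 * millsBound x := by
  set d : ℝ → ℝ := fun t ↦ -((1 + 1 / t ^ 2) * exp (-t ^ 2 / 2) / √(2 * π))
  have hderiv : ∀ t ∈ Ici x, HasDerivAt millsBound (d t) t := fun t ht ↦
    hasDerivAt_millsBound (hx.trans_le ht).ne'
  have hd : ∀ t ∈ Ioi x, d t ≤ 0 := fun t _ ↦ neg_nonpos.2 (by positivity)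
  have hfi := integrableOn_Ioi_deriv_of_nonpos' hderiv hd tendsto_millsBound_atTop
  have hle : ∀ t ∈ Ioi x, exp (-t ^ 2) ≤ -(√π / 2) * d t := fun t ht ↦
    calc exp (-t ^ 2) = 2 * √2 * exp (-t ^ 2 / 2) * exp (-t ^ 2 / 2) / (2 * √2) := by
          rw [mul_assoc (2 * √2), ← exp_add, mul_div_cancel_left₀ _ (by positivity)]
          ring_nf
      _ ≤ (1 + 1 / t ^ 2) * exp (-t ^ 2 / 2) / (2 * √2) := by
          gcongr
          exact two_mul_sqrt_two_mul_exp_le (hx.trans ht).ne'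
      _ = -(√π / 2) * d t := by
          simp only [d]
          rw [sqrt_mul zero_le_two]
          field_simp
  calc ∫ t in Ioi x, exp (-t ^ 2) ≤ ∫ t in Ioi x, -(√π / 2) * d t :=
        setIntegral_mono_on integrable_exp_neg_sq.integrableOn (hfi.const_mul _)
          measurableSet_Ioi hle
    _ = √π / 2 * millsBound x := by
      rw [integral_const_mul,
        integral_Ioi_of_hasDerivAt_of_nonpos' hderiv hd tendsto_millsBound_atTop]
      ring

theorem one_sub_millsBound_le_integral_exp_neg_mul_sq {b x : ℝ} (hb : 0 < b) (hx : 0 < x) :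
    √(π / b) / 2 * (1 - millsBound (√b * x)) ≤ ∫ t in 0..x, exp (-b * t ^ 2) := by
  have hsplit := intervalIntegral.integral_interval_add_Ioi (a := 0) (b := √b * x)
    integrable_exp_neg_sq.integrableOn integrable_exp_neg_sq.integrableOn
  rw [integral_Ioi_zero_exp_neg_sq] at hsplit
  have htail := integral_Ioi_exp_neg_sq_le (mul_pos (sqrt_pos.2 hb) hx)
  have hscale : ∫ t in 0..x, exp (-b * t ^ 2) =
      (√b)⁻¹ * ∫ t in 0..√b * x, exp (-t ^ 2) := by
    have := intervalIntegral.integral_comp_mul_left (a := 0) (b := x)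
      (fun t ↦ exp (-t ^ 2)) (sqrt_pos.2 hb).ne'
    simpa only [mul_pow, sq_sqrt hb.le, mul_zero, smul_eq_mul, neg_mul] using this
  calc √(π / b) / 2 * (1 - millsBound (√b * x))
      = (√b)⁻¹ * (√π / 2 - √π / 2 * millsBound (√b * x)) := by
        rw [sqrt_div pi_pos.le]
        ring
    _ ≤ (√b)⁻¹ * ∫ t in 0..√b * x, exp (-t ^ 2) := by
      gcongr
      linarith
    _ = ∫ t in 0..x, exp (-b * t ^ 2) := hscale.symm

theorem le_integral_normalizedIntegrand {κ s Θ : ℝ} (hκ : 0 < κ) (hs₀ : 0 < s) (hs : s ≤ 1 / 4)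
    (hΘ₀ : 0 < Θ) (hΘ : Θ < π / 2) :
    √(π / (κ * s / cos Θ)) / 2 * (1 - millsBound (√(κ * s / cos Θ) * Θ)) ≤
      ∫ θ in 0..π, normalizedIntegrand κ s θ := by
  have hcos : 0 < cos Θ := cos_pos_of_mem_Ioo ⟨by linarith, hΘ⟩
  have hcont := continuous_normalizedIntegrand (s := s) hκ.le
  calc √(π / (κ * s / cos Θ)) / 2 * (1 - millsBound (√(κ * s / cos Θ) * Θ))
      ≤ ∫ θ in 0..Θ, exp (-(κ * s / cos Θ) * θ ^ 2) :=
        one_sub_millsBound_le_integral_exp_neg_mul_sq (by positivity) hΘ₀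
    _ ≤ ∫ θ in 0..Θ, normalizedIntegrand κ s θ :=
        intervalIntegral.integral_mono_on hΘ₀.le
          (Continuous.intervalIntegrable (by fun_prop) _ _) (hcont.intervalIntegrable _ _)
          fun θ hθ ↦ exp_le_normalizedIntegrand hκ.le hs₀.le hs hθ.1 hθ.2 hΘ
    _ ≤ ∫ θ in 0..π, normalizedIntegrand κ s θ :=
        intervalIntegral.integral_mono_interval le_rfl hΘ₀.le (by linarith [pi_pos])
          (.of_forall (normalizedIntegrand_nonneg κ hs)) (hcont.intervalIntegrable _ _)

theorem exp_add_exp_le_exp_add_exp {a b c d : ℝ} (had : a ≤ d) (hbd : b ≤ d)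
    (h : a + b ≤ c + d) : exp a + exp b ≤ exp c + exp d := by
  have hprod : exp a * exp b ≤ exp c * exp d := by
    rw [← exp_add, ← exp_add]
    gcongr
  -- `0 ≤ (exp d - exp a) * (exp d - exp b)`, divided by `exp d`
  refine le_of_mul_le_mul_right ?_ (exp_pos d)
  linarith [mul_nonneg (sub_nonneg.2 (exp_le_exp.2 had)) (sub_nonneg.2 (exp_le_exp.2 hbd))]

theorem nine_div_pi_sq_mul_sq_le_one {θ : ℝ} (hθ₀ : 0 ≤ θ) (hθ : θ ≤ π / 3) :
    9 / π ^ 2 * θ ^ 2 ≤ 1 :=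
  calc 9 / π ^ 2 * θ ^ 2 ≤ 9 / π ^ 2 * (π / 3) ^ 2 := by gcongr
    _ = 1 := by
      field_simp
      norm_num

theorem cos_sub_mul_sq_le {θ Θ : ℝ} (hθ₀ : 0 ≤ θ) (hθ : θ ≤ π / 3) (hΘ₀ : 0 ≤ Θ)
    (hΘ : Θ ≤ π / 3) : (cos Θ - 9 / π ^ 2) * θ ^ 2 ≤ 1 - 9 / π ^ 2 * Θ ^ 2 := by
  have hθ1 := nine_div_pi_sq_mul_sq_le_one hθ₀ hθ
  have hΘ1 := nine_div_pi_sq_mul_sq_le_one hΘ₀ hΘ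
  obtain hcos | hcos := le_total (cos Θ) (9 / π ^ 2)
  · linarith [mul_nonneg (sub_nonneg.2 hcos) (sq_nonneg θ)]
  have hquad : cos Θ ≤ 1 - 2 / π ^ 2 * Θ ^ 2 :=
    cos_le_one_sub_mul_cos_sq (by rw [abs_of_nonneg hΘ₀]; linarith [pi_pos])
  have hpi : 2 / π ^ 2 * Θ ^ 2 = 2 / 9 * (9 / π ^ 2 * Θ ^ 2) := by ring
  have hpi_sq : π ^ 2 ≤ 10 := by nlinarith [pi_lt_d2, pi_pos]
  calc (cos Θ - 9 / π ^ 2) * θ ^ 2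
      = (cos Θ * (π ^ 2 / 9) - 1) * (9 / π ^ 2 * θ ^ 2) := by
        field_simp
    _ ≤ cos Θ * (π ^ 2 / 9) - 1 := by
        refine mul_le_of_le_one_right ?_ hθ1
        rw [div_le_iff₀ (by positivity)] at hcos
        linarith
    _ ≤ (1 - 2 / 9 * (9 / π ^ 2 * Θ ^ 2)) * (10 / 9) - 1 := by
        gcongr <;> linarith
    _ ≤ 1 - 9 / π ^ 2 * Θ ^ 2 := by linarith

theorem exp_neg_mul_nine_div_pi_sq_mul_sq_le {u θ Θ : ℝ} (hu : 0 ≤ u) (hΘ₀ : 0 ≤ Θ)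
    (hΘθ : Θ ≤ θ) (hθ : θ ≤ π / 3) :
    exp (-(u * (9 / π ^ 2 * θ ^ 2))) ≤
      exp (-(u * (cos Θ * θ ^ 2))) + (exp (-(u * (9 / π ^ 2 * Θ ^ 2))) - exp (-u)) := by
  have hΘ : Θ ≤ π / 3 := hΘθ.trans hθ
  have hΘ1 := nine_div_pi_sq_mul_sq_le_one hΘ₀ hΘ
  have key := exp_add_exp_le_exp_add_exp (a := -(u * (9 / π ^ 2 * θ ^ 2))) (b := -u)
    (c := -(u * (cos Θ * θ ^ 2))) (d := -(u * (9 / π ^ 2 * Θ ^ 2))) (by gcongr)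
    (neg_le_neg (mul_le_of_le_one_right hu hΘ1))
    (by linarith [mul_le_mul_of_nonneg_left (cos_sub_mul_sq_le (hΘ₀.trans hΘθ) hθ hΘ₀ hΘ) hu])
  linarith

theorem exp_neg_le_exp_neg_mul_nine_div_pi_sq_mul_sq {u Θ : ℝ} (hu : 0 ≤ u) (hΘ₀ : 0 ≤ Θ)
    (hΘ : Θ ≤ π / 3) : exp (-u) ≤ exp (-(u * (9 / π ^ 2 * Θ ^ 2))) :=
  exp_le_exp.2 <| neg_le_neg <|
    mul_le_of_le_one_right hu (nine_div_pi_sq_mul_sq_le_one hΘ₀ hΘ)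

theorem normalizedIntegrand_le_exp_add {κ s θ Θ : ℝ} (hκ : 0 ≤ κ) (hs₀ : 0 ≤ s)
    (hs : s ≤ 1 / 4) (hθ₀ : 0 ≤ θ) (hθ : θ ≤ π / 3) (hΘ₀ : 0 ≤ Θ) (hΘ : Θ ≤ π / 3) :
    normalizedIntegrand κ s θ ≤ exp (-(κ * s * (cos Θ * θ ^ 2))) +
      (exp (-(κ * s * (9 / π ^ 2 * Θ ^ 2))) - exp (-(κ * s))) := by
  have hu : 0 ≤ κ * s := mul_nonneg hκ hs₀
  obtain hθΘ | hΘθ := le_total θ Θ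
  · linarith [exp_neg_le_exp_neg_mul_nine_div_pi_sq_mul_sq hu hΘ₀ hΘ,
      normalizedIntegrand_le_exp_of_le_chord_sq hκ hs₀ hs
      (cos_mul_sq_le_chord_sq hθ₀ hθΘ (by linarith [pi_pos]))]
  · exact (normalizedIntegrand_le_exp_of_le_chord_sq hκ hs₀ hs
      (nine_div_pi_sq_mul_sq_le_chord_sq hθ₀ hθ)).trans
      (exp_neg_mul_nine_div_pi_sq_mul_sq_le hu hΘ₀ hΘθ hθ)

theorem integral_zero_pi_div_three_normalizedIntegrand_le {κ s Θ : ℝ} (hκ : 0 < κ) (hs₀ : 0 < s)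
    (hs : s ≤ 1 / 4) (hΘ₀ : 0 ≤ Θ) (hΘ : Θ ≤ π / 3) :
    ∫ θ in 0..π / 3, normalizedIntegrand κ s θ ≤ √(π / (κ * s * cos Θ)) / 2 +
      π / 3 * (exp (-(κ * s * (9 / π ^ 2 * Θ ^ 2))) - exp (-(κ * s))) := by
  have hcos : 0 < cos Θ := cos_pos_of_mem_Ioo ⟨by linarith [pi_pos], by linarith [pi_pos]⟩
  set G : ℝ → ℝ := fun θ ↦ exp (-(κ * s * cos Θ) * θ ^ 2)
  set ε := exp (-(κ * s * (9 / π ^ 2 * Θ ^ 2))) - exp (-(κ * s))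
  have hG : IntervalIntegrable G volume 0 (π / 3) :=
    Continuous.intervalIntegrable (by fun_prop) _ _
  have hle : ∀ θ ∈ Icc 0 (π / 3), normalizedIntegrand κ s θ ≤ G θ + ε := fun θ hθ ↦ by
    simpa only [G, ε, neg_mul, mul_assoc] using
      normalizedIntegrand_le_exp_add hκ.le hs₀.le hs hθ.1 hθ.2 hΘ₀ hΘ
  calc ∫ θ in 0..π / 3, normalizedIntegrand κ s θ ≤ ∫ θ in 0..π / 3, (G θ + ε) :=
        intervalIntegral.integral_mono_on (by positivity)
          ((continuous_normalizedIntegrand hκ.le).intervalIntegrable _ _)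
          (hG.add intervalIntegrable_const) hle
    _ = (∫ θ in 0..π / 3, G θ) + π / 3 * ε := by
        rw [intervalIntegral.integral_add hG intervalIntegrable_const,
          intervalIntegral.integral_const, sub_zero, smul_eq_mul]
    _ ≤ √(π / (κ * s * cos Θ)) / 2 + π / 3 * ε := by
        gcongr
        exact integral_exp_neg_mul_sq_le (by positivity) (by positivity)

theorem integral_pi_div_three_pi_normalizedIntegrand_le {κ s : ℝ} (hκ : 0 ≤ κ) (hs₀ : 0 ≤ s)
    (hs : s ≤ 1 / 4) :
    ∫ θ in π / 3..π, normalizedIntegrand κ s θ ≤ 2 * π / 3 * exp (-(κ * s)) :=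
  calc ∫ θ in π / 3..π, normalizedIntegrand κ s θ ≤ ∫ _ in π / 3..π, exp (-(κ * s)) := by
        refine intervalIntegral.integral_mono_on (by linarith [pi_pos])
          ((continuous_normalizedIntegrand hκ).intervalIntegrable _ _)
          intervalIntegrable_const fun θ hθ ↦ ?_
        simpa only [mul_one] using normalizedIntegrand_le_exp_of_le_chord_sq hκ hs₀ hs
          (one_le_chord_sq hθ.1 hθ.2)
    _ = 2 * π / 3 * exp (-(κ * s)) := by
        rw [intervalIntegral.integral_const, smul_eq_mul]
        ring

theorem integral_normalizedIntegrand_le {κ s Θ : ℝ} (hκ : 0 < κ) (hs₀ : 0 < s) (hs : s ≤ 1 / 4)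
    (hΘ₀ : 0 ≤ Θ) (hΘ : Θ ≤ π / 3) :
    ∫ θ in 0..π, normalizedIntegrand κ s θ ≤
      √(π / (κ * s * cos Θ)) / 2 + 2 * π / 3 * exp (-(κ * s * (9 / π ^ 2 * Θ ^ 2))) := by
  have hfi := (continuous_normalizedIntegrand (s := s) hκ.le).intervalIntegrable (μ := volume)
  have hexp : exp (-(κ * s)) ≤ exp (-(κ * s * (9 / π ^ 2 * Θ ^ 2))) :=
    exp_neg_le_exp_neg_mul_nine_div_pi_sq_mul_sq (by positivity) hΘ₀ hΘ
  rw [← intervalIntegral.integral_add_adjacent_intervals (hfi 0 (π / 3)) (hfi (π / 3) π)]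
  linarith [integral_zero_pi_div_three_normalizedIntegrand_le hκ hs₀ hs hΘ₀ hΘ,
    integral_pi_div_three_pi_normalizedIntegrand_le hκ.le hs₀.le hs,
    mul_le_mul_of_nonneg_left hexp pi_pos.le]

theorem sqrt_cos_mul_one_sub_millsBound_le {κ s Θ T : ℝ} (hκ : 0 < κ) (hs₀ : 0 < s)
    (hs : s ≤ 1 / 4) (hΘ₀ : 0 < Θ) (hΘ : Θ < π / 2) (hT₀ : 0 < T) (hT : T ≤ Θ * √s) :
    √(cos Θ) * (1 - millsBound (√κ * T)) ≤
      √(κ * s / π) * (2 * ∫ θ in 0..π, normalizedIntegrand κ s θ) := by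
  have hcos : 0 < cos Θ := cos_pos_of_mem_Ioo ⟨by linarith, hΘ⟩
  have hT' : √κ * T ≤ √(κ * s / cos Θ) * Θ :=
    calc √κ * T ≤ √κ * (Θ * √s) := by gcongr
      _ = √(κ * s) * Θ := by
        rw [sqrt_mul hκ.le]
        ring
      _ ≤ √(κ * s / cos Θ) * Θ := by
        gcongr
        exact le_div_self (by positivity) hcos (cos_le_one Θ)
  calc √(cos Θ) * (1 - millsBound (√κ * T))
      ≤ √(cos Θ) * (1 - millsBound (√(κ * s / cos Θ) * Θ)) := by
        gcongr √(cos Θ) * (1 - ?_)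
        exact antitoneOn_millsBound (mem_Ioi.2 (by positivity)) (mem_Ioi.2 (by positivity)) hT'
    _ = √(κ * s / π) *
          (2 * (√(π / (κ * s / cos Θ)) / 2 * (1 - millsBound (√(κ * s / cos Θ) * Θ)))) := by
        have hsqrt : √(κ * s / π) * √(π / (κ * s / cos Θ)) = √(cos Θ) := by
          rw [← sqrt_mul (by positivity)]
          congr 1
          field_simp
        rw [← hsqrt]
        ring
    _ ≤ √(κ * s / π) * (2 * ∫ θ in 0..π, normalizedIntegrand κ s θ) := by
        gcongr
        exact le_integral_normalizedIntegrand hκ hs₀ hs hΘ₀ hΘ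

theorem sqrt_mul_div_pi_mul_two_mul_pi_le {κ s : ℝ} (hκ : 0 ≤ κ) (hs : s ≤ 1 / 4) :
    √(κ * s / π) * (2 * π) ≤ √(π * κ) :=
  calc √(κ * s / π) * (2 * π) = √(κ * s / π * (2 * π) ^ 2) := by
        rw [sqrt_mul' _ (by positivity), sqrt_sq (by positivity)]
    _ = √(π * κ * (4 * s)) := by
        congr 1
        field_simp
        ring
    _ ≤ √(π * κ) := sqrt_le_sqrt (mul_le_of_le_one_right (by positivity) (by linarith))

theorem sqrt_mul_integral_normalizedIntegrand_le {κ s Θ T : ℝ} (hκ : 0 < κ) (hs₀ : 0 < s)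
    (hs : s ≤ 1 / 4) (hΘ₀ : 0 ≤ Θ) (hΘ : Θ ≤ π / 3) (hT₀ : 0 ≤ T) (hT : T ≤ Θ * √s) :
    √(κ * s / π) * (2 * ∫ θ in 0..π, normalizedIntegrand κ s θ) ≤
      (√(cos Θ))⁻¹ + 2 / 3 * √(π * κ) * exp (-(9 / π ^ 2) * κ * T ^ 2) := by
  have hcos : 0 < cos Θ := cos_pos_of_mem_Ioo ⟨by linarith [pi_pos], by linarith [pi_pos]⟩
  set E := exp (-(κ * s * (9 / π ^ 2 * Θ ^ 2)))
  have hpeak : √(κ * s / π) * √(π / (κ * s * cos Θ)) = (√(cos Θ))⁻¹ := by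
    rw [← sqrt_mul (by positivity), ← sqrt_inv]
    congr 1
    field_simp
  have hE : E ≤ exp (-(9 / π ^ 2) * κ * T ^ 2) := by
    have hT_sq : T ^ 2 ≤ Θ ^ 2 * s := by
      calc T ^ 2 ≤ (Θ * √s) ^ 2 := by gcongr
        _ = Θ ^ 2 * s := by rw [mul_pow, sq_sqrt hs₀.le]
    apply exp_le_exp.2
    calc -(κ * s * (9 / π ^ 2 * Θ ^ 2)) = -(9 / π ^ 2 * κ * (Θ ^ 2 * s)) := by ring
      _ ≤ -(9 / π ^ 2 * κ * T ^ 2) := by gcongr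
      _ = -(9 / π ^ 2) * κ * T ^ 2 := by ring
  calc √(κ * s / π) * (2 * ∫ θ in 0..π, normalizedIntegrand κ s θ)
      ≤ √(κ * s / π) * (2 * (√(π / (κ * s * cos Θ)) / 2 + 2 * π / 3 * E)) := by
        gcongr
        exact integral_normalizedIntegrand_le hκ hs₀ hs hΘ₀ hΘ
    _ = (√(cos Θ))⁻¹ + 2 / 3 * (√(κ * s / π) * (2 * π)) * E := by
        rw [← hpeak]
        ring
    _ ≤ (√(cos Θ))⁻¹ + 2 / 3 * √(π * κ) * exp (-(9 / π ^ 2) * κ * T ^ 2) := by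
        gcongr
        exact sqrt_mul_div_pi_mul_two_mul_pi_le hκ.le hs

theorem intervalIntegral_neg_self_of_even {E : Type*} [NormedAddCommGroup E] [NormedSpace ℝ E]
    {f : ℝ → E} {a : ℝ} (hf : ∀ x, f (-x) = f x) (hfi : IntervalIntegrable f volume 0 a) :
    ∫ x in -a..a, f x = 2 • ∫ x in 0..a, f x := by
  have hneg : ∫ x in -a..0, f x = ∫ x in 0..a, f x := by
    simpa only [hf, neg_zero] using (intervalIntegral.integral_comp_neg f (a := 0) (b := a)).symm
  have hfi' : IntervalIntegrable f volume (-a) 0 := by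
    simpa only [zero_sub, neg_zero, hf] using (hfi.comp_sub_left 0).symm
  rw [← intervalIntegral.integral_add_adjacent_intervals hfi' hfi, hneg, two_nsmul]

section LaplaceRatio

variable {κ r γ : ℝ}

theorem mul_div_add_sq_le_quarter (hr : 0 < r) (hγ : 0 < γ) : r * γ / (r + γ) ^ 2 ≤ 1 / 4 := by
  rw [div_le_div_iff₀ (by positivity) (by norm_num)]
  linarith [four_mul_le_sq_add r γ]

theorem rpow_add_two_mul_mul_cos_eq (hr : 0 < r) (hγ : 0 < γ) (κ θ : ℝ) :
    (r ^ 2 + γ ^ 2 + 2 * γ * r * cos θ) ^ κ =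
      (r + γ) ^ (2 * κ) * normalizedIntegrand κ (r * γ / (r + γ) ^ 2) θ := by
  have hfactor : r ^ 2 + γ ^ 2 + 2 * γ * r * cos θ =
      (r + γ) ^ 2 * (1 - r * γ / (r + γ) ^ 2 * chord θ ^ 2) := by
    rw [chord_sq]
    field_simp
    ring
  rw [hfactor, mul_rpow (by positivity)
    (one_sub_mul_chord_sq_nonneg (mul_div_add_sq_le_quarter hr hγ) θ), normalizedIntegrand,
    rpow_mul (by positivity), rpow_two]

theorem laplace_ratio_eq (hκ : 0 < κ) (hr : 0 < r) (hγ : 0 < γ) :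
    1 / (√(π / (κ * r * γ)) * (r + γ) ^ (2 * κ + 1)) *
        ∫ θ in -π..π, (r ^ 2 + γ ^ 2 + 2 * γ * r * cos θ) ^ κ =
      √(κ * (r * γ / (r + γ) ^ 2) / π) *
        (2 * ∫ θ in 0..π, normalizedIntegrand κ (r * γ / (r + γ) ^ 2) θ) := by
  have hsqrt : √(κ * (r * γ / (r + γ) ^ 2) / π) = 1 / (√(π / (κ * r * γ)) * (r + γ)) := by
    rw [← sqrt_sq (by positivity : 0 ≤ r + γ), ← sqrt_mul (by positivity), one_div, ← sqrt_inv,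
      sqrt_sq (by positivity)]
    congr 1
    field_simp
  have hpow : (r + γ) ^ (2 * κ + 1) = (r + γ) ^ (2 * κ) * (r + γ) := rpow_add_one (by positivity) _
  simp_rw [rpow_add_two_mul_mul_cos_eq hr hγ]
  rw [intervalIntegral.integral_const_mul,
    intervalIntegral_neg_self_of_even (normalizedIntegrand_neg κ _)
      ((continuous_normalizedIntegrand hκ.le).intervalIntegrable _ _), nsmul_eq_mul,
    Nat.cast_ofNat, hsqrt, hpow]
  field_simp

end LaplaceRatio

theorem theta_integral_uniform_bounds_general {κ r γ Θ T : ℝ} (hκ : 0 < κ) (hr : 0 < r)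
    (hγ : 0 < γ) (hΘ : Θ ∈ Ioc 0 (π / 3)) (hT : T ∈ Ioc 0 (Θ * √(r * γ) / (r + γ))) :
    √(cos Θ) * (1 - 1 / (T * √(2 * π * κ)) * exp (-κ * T ^ 2 / 2)) ≤
      1 / (√(π / (κ * r * γ)) * (r + γ) ^ (2 * κ + 1)) *
        ∫ θ in -π..π, (r ^ 2 + γ ^ 2 + 2 * γ * r * cos θ) ^ κ ∧
    1 / (√(π / (κ * r * γ)) * (r + γ) ^ (2 * κ + 1)) *
        (∫ θ in -π..π, (r ^ 2 + γ ^ 2 + 2 * γ * r * cos θ) ^ κ) ≤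
      (√(cos Θ))⁻¹ + 2 / 3 * √(π * κ) * exp (-(9 / π ^ 2) * κ * T ^ 2) := by
  have hs₀ : 0 < r * γ / (r + γ) ^ 2 := by positivity
  have hs := mul_div_add_sq_le_quarter hr hγ
  have hT' : T ≤ Θ * √(r * γ / (r + γ) ^ 2) := by
    rw [sqrt_div (by positivity), sqrt_sq (by positivity), ← mul_div_assoc]
    exact hT.2
  have hmills : 1 / (T * √(2 * π * κ)) * exp (-κ * T ^ 2 / 2) = millsBound (√κ * T) := by
    rw [millsBound, mul_pow, sq_sqrt hκ.le, sqrt_mul (by positivity)]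
    ring_nf
  rw [laplace_ratio_eq hκ hr hγ, hmills]
  exact ⟨sqrt_cos_mul_one_sub_millsBound_le hκ hs₀ hs hΘ.1 (by linarith [hΘ.2, pi_pos]) hT.1 hT',
    sqrt_mul_integral_normalizedIntegrand_le hκ hs₀ hs hΘ.1.le hΘ.2 hT.1.le hT'⟩

theorem sqrt_div_one_add_le_sqrt_mul_div_add {r γ A : ℝ} (hr : 0 < r) (hγ : 0 < γ) (hA : 0 < A)
    (hrγ : r / γ ∈ Icc (1 / A) A) : √A / (1 + A) ≤ √(r * γ) / (r + γ) := by
  have hlow : γ ≤ A * r := by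
    have := (div_le_div_iff₀ hA hγ).1 hrγ.1
    linarith
  have hhigh : r ≤ A * γ := (div_le_iff₀ hγ).1 hrγ.2
  have hsq : A / (1 + A) ^ 2 ≤ r * γ / (r + γ) ^ 2 := by
    rw [div_le_div_iff₀ (by positivity) (by positivity)]
    linarith [mul_nonneg (sub_nonneg.2 hlow) (sub_nonneg.2 hhigh)]
  simpa only [sqrt_div hA.le, sqrt_div (mul_pos hr hγ).le, sqrt_sq (add_pos one_pos hA).le,
    sqrt_sq (add_pos hr hγ).le] using sqrt_le_sqrt hsq

/-- Bounds for the normalized `θ`-integral under the assumptions `Θ ∈ (0, π/3]`,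
`r/γ ∈ [1/A, A]`, with `T = Θ√A/(1+A)` and `A₁ = √(π/(k r γ)) (r+γ)^{2k+1}`:
`(cos Θ)^{1/2}(1 - e^{-kT²/2}/(T√(2πk))) ≤ (1/A₁) ∫_{-π}^π (r²+γ²+2γr cos θ)^k dθ
  ≤ (cos Θ)^{-1/2} + (2/3)√(πk) e^{-(9/π²)kT²}`. -/
theorem theta_integral_uniform_bounds (k : ℕ) (hk : 1 ≤ k) (r γ A Θ : ℝ)
    (hr : 0 < r) (hγ : 0 < γ) (hA : 1 < A) (hΘ : Θ ∈ Set.Ioc 0 (Real.pi / 3))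
    (hrγ : r / γ ∈ Set.Icc (1 / A) A) :
    Real.sqrt (Real.cos Θ) *
        (1 - 1 / (Θ * Real.sqrt A / (1 + A) * Real.sqrt (2 * Real.pi * k)) *
          Real.exp (-(k : ℝ) * (Θ * Real.sqrt A / (1 + A)) ^ 2 / 2)) ≤
      1 / (Real.sqrt (Real.pi / (k * r * γ)) * (r + γ) ^ (2 * k + 1)) *
        ∫ θ in (-Real.pi)..Real.pi, (r ^ 2 + γ ^ 2 + 2 * γ * r * Real.cos θ) ^ k ∧
    1 / (Real.sqrt (Real.pi / (k * r * γ)) * (r + γ) ^ (2 * k + 1)) *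
        (∫ θ in (-Real.pi)..Real.pi, (r ^ 2 + γ ^ 2 + 2 * γ * r * Real.cos θ) ^ k) ≤
      (Real.sqrt (Real.cos Θ))⁻¹ +
        2 / 3 * Real.sqrt (Real.pi * k) *
          Real.exp (-(9 / Real.pi ^ 2) * k * (Θ * Real.sqrt A / (1 + A)) ^ 2) := by
  have hA₀ : 0 < A := one_pos.trans hA
  have hΘ₀ : 0 < Θ := hΘ.1
  have hT : Θ * √A / (1 + A) ∈ Ioc 0 (Θ * √(r * γ) / (r + γ)) := by
    refine ⟨by positivity, ?_⟩
    rw [mul_div_assoc, mul_div_assoc]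
    exact mul_le_mul_of_nonneg_left (sqrt_div_one_add_le_sqrt_mul_div_add hr hγ hA₀ hrγ) hΘ₀.le
  exact_mod_cast theta_integral_uniform_bounds_general (Nat.cast_pos.2 hk) hr hγ hΘ hT
end
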